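/- For every nonnegative integer n, the number of partitions of 5n+3 without repeated odd parts whose M₂-rank is congruent to 0 modulo 5 equals the number of partitions of 5n+3 without repeated odd parts whose M₂-rank is congruent to 2 modulo 5; that is, N₂(0,5,5n+3) = N₂(2,5,5n+3). -/

import Mathlib

/-!
Write `D(q) = ∑ (N₂(0,5,n) - N₂(2,5,n)) qⁿ`. The claim is that the terms of `D` with exponent
`≡ 3 (mod 5)` all vanish. All series are treated as absolutely convergent series in `|q| < 1/2`.

*From partitions to an Appell-type sum.* Let `P` be the generating function of the partitions without
repeated odd parts and `Q_r` that of those with M₂-rank at least `r`. Remove the largest part of a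
partition of rank at least `r`, pad the remaining parts with zeros to a number determined by the
largest part, add `2` to each of them, and adjoin a part `1` if the removed part was even. This is a
bijection onto the partitions of rank at most `r + 1`, lowering the size by `2 r + 1` (`tsum_Aset`);
hence `Q_r = q^(2r+1) (P - Q_{r+2})`, with an extra `1` for `r = 0` (`Qr_rec`, `Qr_zero`). Iteration
gives the symmetry of the rank (`Qr_sym`), and, at `q = -Q`, `Q_r = -P · U_r` with the one-sided theta
series `U_r = ∑_{k ≥ 1} Q^(2k²-k+2rk)` (`Qr_eq_U`) and `P(-Q) ψ(Q) = 1` with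
`ψ(Q) = ∑_{i ∈ ℤ} Q^(i(2i-1))` (`Pq_mul_psi`). Summing over the ranks modulo `5` gives
`ψ(Q) D(-Q) = 1 + ∑_{i ≠ 0} Q^(i(2i-1)) (2 Q^(2i) + Q^(4i)) / (1 - Q^(10i))`, called `Gs Q`
(`psi_mul_Dq`).

*Five-dissection.* Put `Y = Q⁵`. The summation index of each series is split modulo `5`. For `ψ` this
gives `ψ(Q) = A + Q B + Q³ C` (`psi_dissect`), where `A`, `B`, `C` are theta values depending only on
`Y`; for `Gs` it gives five components that are Appell–Lerch sums in base `Y⁵` (`Hs_dissect`). Products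
of a theta function with an Appell–Lerch sum are compared by looking at Laurent coefficients in the
free variable: a suitable combination has coefficients obeying the recurrence of the theta
coefficients, so it is a multiple of a theta function (`gauge0`, `hcirc`). The three-term relation for
theta functions (`threeZ`) and a relation for their logarithmic derivatives (`fourZ`) follow. With
these relations, one verifies that `Gs Q = (A + Q B + Q³ C)(E₀ + Q E₁ + Q² E₂ + Q⁴ E₄)` for explicit
`E₀, E₁, E₂, E₄` depending only on `Y` (`five`, `quotient_dissect`). The absence of a `Q³` term is the
theorem: averaging over the five choices of `Q` with `Q⁵ = Y` isolates the terms of `D` with exponent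
`≡ 3 (mod 5)`, and they vanish by uniqueness of power series (`dn_third`).
-/

/-- The infinite q-Pochhammer symbol `(a; q)_∞ = ∏_{k ≥ 0} (1 - a qᵏ)`. -/
noncomputable def qPoch (a q : ℂ) : ℂ := ∏' k : ℕ, (1 - a * q ^ k)

/-- A partition has no repeated odd parts: each odd number occurs at most once as a part. -/
def Nat.Partition.noRepeatedOdd {n : ℕ} (p : n.Partition) : Prop :=
  ∀ i, Odd i → p.parts.count i ≤ 1

/-- The M₂-rank of a partition: ⌈(largest part)/2⌉ minus the number of parts. -/
def Nat.Partition.m2Rank {n : ℕ} (p : n.Partition) : ℤ :=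
  (((p.parts.sup + 1) / 2 : ℕ) : ℤ) - (Multiset.card p.parts : ℤ)

/-- `N2 s ℓ n` is the number of partitions of `n` without repeated odd parts whose
M₂-rank is congruent to `s` modulo `ℓ`. -/
noncomputable def N2 (s ℓ n : ℕ) : ℕ :=
  Nat.card {p : n.Partition // p.noRepeatedOdd ∧ p.m2Rank ≡ (s : ℤ) [ZMOD (ℓ : ℤ)]}

namespace M2

/-! ### Theta functions and Appell–Lerch sums -/

/-- The exponent `n (n - 1) / 2`; the division is exact. -/
def tri (n : ℤ) : ℤ := n * (n - 1) / 2

lemma two_mul_tri (n : ℤ) : 2 * tri n = n * (n - 1) := by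
  have h : (2 : ℤ) ∣ n * (n - 1) := by
    have := Int.even_mul_pred_self n
    exact this.two_dvd
  unfold tri
  omega

lemma tri_succ (n : ℤ) : tri (n + 1) = tri n + n := by
  have h1 := two_mul_tri n
  have h2 := two_mul_tri (n + 1)
  have : 2 * tri (n + 1) = 2 * (tri n + n) := by rw [h2, mul_add, h1]; ring
  omega

lemma tri_neg (n : ℤ) : tri (-n) = tri n + n := by
  have h1 := two_mul_tri n
  have h2 := two_mul_tri (-n)
  have : 2 * tri (-n) = 2 * (tri n + n) := by rw [h2, mul_add, h1]; ring
  omega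

/-- The coefficients `(-1)ⁿ p^{n(n-1)/2}` of the theta function. -/
noncomputable def uc (p : ℂ) (n : ℤ) : ℂ := (-1) ^ n * p ^ tri n

lemma uc_zero (p : ℂ) : uc p 0 = 1 := by simp [uc, tri]

lemma uc_ne {p : ℂ} (hp : p ≠ 0) (n : ℤ) : uc p n ≠ 0 :=
  mul_ne_zero (zpow_ne_zero _ (by norm_num)) (zpow_ne_zero _ hp)

lemma uc_succ {p : ℂ} (hp : p ≠ 0) (n : ℤ) : uc p (n + 1) = -(p ^ n * uc p n) := by
  unfold uc
  rw [tri_succ, zpow_add₀ hp, zpow_add₀ (by norm_num : (-1 : ℂ) ≠ 0)]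
  simp only [zpow_one]; ring

lemma uc_neg {p : ℂ} (hp : p ≠ 0) (n : ℤ) : uc p (-n) = p ^ n * uc p n := by
  unfold uc
  rw [tri_neg, zpow_add₀ hp]
  have : ((-1 : ℂ)) ^ (-n) = (-1) ^ n := by
    rw [zpow_neg, ← inv_zpow]; norm_num
  rw [this]; ring

lemma summable_uc_nat {p : ℂ} (hp : p ≠ 0) (hp1 : ‖p‖ < 1) {x : ℂ} (hx : x ≠ 0) :
    Summable (fun n : ℕ => ‖uc p n * x ^ (n : ℤ)‖) := by
  apply summable_of_ratio_test_tendsto_lt_one (l := 0) one_pos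
  · filter_upwards with n
    exact norm_ne_zero_iff.2 (mul_ne_zero (uc_ne hp _) (zpow_ne_zero _ hx))
  · have : (fun n : ℕ => ‖‖uc p (n + 1 : ℕ) * x ^ ((n + 1 : ℕ) : ℤ)‖‖ / ‖‖uc p n * x ^ (n : ℤ)‖‖)
        = fun n : ℕ => ‖p‖ ^ n * ‖x‖ := by
      funext n
      have h1 : ‖uc p n * x ^ (n : ℤ)‖ ≠ 0 :=
        norm_ne_zero_iff.2 (mul_ne_zero (uc_ne hp _) (zpow_ne_zero _ hx))
      rw [norm_norm, norm_norm, div_eq_iff h1]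
      push_cast
      rw [uc_succ hp, zpow_add₀ hx, zpow_one]
      simp only [norm_mul, norm_neg, zpow_natCast, norm_pow]; ring
    rw [this]
    simpa using (tendsto_pow_atTop_nhds_zero_of_lt_one (norm_nonneg p) hp1).mul_const ‖x‖

lemma summable_uc {p : ℂ} (hp : p ≠ 0) (hp1 : ‖p‖ < 1) {x : ℂ} (hx : x ≠ 0) :
    Summable (fun n : ℤ => ‖uc p n * x ^ n‖) := by
  have h1 := summable_uc_nat hp hp1 hx
  have h2 := summable_uc_nat hp hp1 (x := p / x) (div_ne_zero hp hx)
  refine Summable.of_nat_of_neg (f := fun n : ℤ => ‖uc p n * x ^ n‖) h1 ?_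
  refine h2.congr (fun n => ?_)
  rw [uc_neg hp, div_zpow, zpow_neg]
  congr 1
  field_simp

lemma summable_nuc {p : ℂ} (hp : p ≠ 0) (hp1 : ‖p‖ < 1) {x : ℂ} (hx : x ≠ 0) :
    Summable (fun n : ℤ => ‖(n * uc p n) * x ^ n‖) := by
  have h1 := summable_uc hp hp1 (x := 2 * x) (mul_ne_zero two_ne_zero hx)
  have h2 := summable_uc hp hp1 (x := x / 2) (div_ne_zero hx two_ne_zero)
  refine Summable.of_nonneg_of_le (fun n => norm_nonneg _) (fun n => ?_) (h1.add h2)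
  have hb : ‖((n : ℤ) : ℂ)‖ ≤ 2 ^ n + (2 : ℝ)⁻¹ ^ n := by
    rw [Complex.norm_intCast]
    have key : ∀ k : ℕ, (k : ℝ) ≤ 2 ^ k := fun k => by
      exact_mod_cast (Nat.lt_two_pow_self (n := k)).le
    rcases Int.eq_nat_or_neg n with ⟨k, rfl | rfl⟩
    · have := key k
      have h3 : (0 : ℝ) ≤ 2⁻¹ ^ (k : ℤ) := by positivity
      simp only [Int.cast_natCast, Nat.abs_cast, zpow_natCast] at *
      linarith
    · have := key k
      have h3 : (0 : ℝ) ≤ 2 ^ (-(k : ℤ)) := by positivity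
      simp only [Int.cast_neg, Int.cast_natCast, abs_neg, Nat.abs_cast, zpow_neg, inv_zpow, inv_inv,
        zpow_natCast, inv_pow] at *
      linarith
  have e1 : ‖uc p n * (2 * x) ^ n‖ = 2 ^ n * ‖uc p n * x ^ n‖ := by
    rw [mul_zpow]; simp only [norm_mul, norm_zpow, Complex.norm_ofNat]; ring
  have e2 : ‖uc p n * (x / 2) ^ n‖ = 2⁻¹ ^ n * ‖uc p n * x ^ n‖ := by
    rw [div_zpow]; simp only [norm_mul, norm_zpow, norm_div, Complex.norm_ofNat, inv_zpow]; ring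
  rw [e1, e2, ← add_mul, mul_assoc, norm_mul]
  exact mul_le_mul_of_nonneg_right hb (norm_nonneg _)

lemma summable_lam {p : ℂ} (hp : p ≠ 0) (hp1 : ‖p‖ < 1) {x b : ℂ} (hx : x ≠ 0) (hb : b ≠ 0) :
    Summable (fun n : ℤ => ‖(uc p n * p ^ n / (1 - b * p ^ n)) * x ^ n‖) := by
  have hp0 : 0 < ‖p‖ := norm_pos_iff.2 hp
  have hb0 : 0 < ‖b‖ := norm_pos_iff.2 hb
  obtain ⟨N, hN⟩ := exists_pow_lt_of_lt_one 
    (show (0 : ℝ) < min (1 / (2 * ‖b‖)) (‖b‖ / 2) by positivity) hp1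
  have hN1 : ‖b‖ * ‖p‖ ^ N ≤ 1 / 2 := by
    have := hN.le.trans (min_le_left _ _)
    calc ‖b‖ * ‖p‖ ^ N ≤ ‖b‖ * (1 / (2 * ‖b‖)) := by gcongr
      _ = 1 / 2 := by field_simp
  have hN2 : 2 * ‖p‖ ^ N ≤ ‖b‖ := by
    have := hN.le.trans (min_le_right _ _); linarith
  have h1 := (summable_uc hp hp1 hx).mul_left (2 / ‖b‖)
  refine Summable.of_norm_bounded_eventually h1 ?_
  rw [Filter.eventually_cofinite]
  refine (Set.finite_Icc (-(N : ℤ)) N).subset ?_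
  intro n hn
  by_contra hc
  apply hn
  rw [norm_norm]
  have key : ‖p ^ n / (1 - b * p ^ n)‖ ≤ 2 / ‖b‖ := by
    have hpn : 0 < ‖p‖ ^ n := zpow_pos hp0 _
    have hnz : ‖b * p ^ n‖ = ‖b‖ * ‖p‖ ^ n := by rw [norm_mul, norm_zpow]
    simp only [Set.mem_Icc, not_and_or, not_le] at hc
    rcases hc with hc | hc
    -- here `n < -N`, and `|b pⁿ|` is large
    · have h2 : 2 ≤ ‖b * p ^ n‖ := by
        rw [hnz]
        have : (‖p‖ ^ N)⁻¹ ≤ ‖p‖ ^ n := by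
          rw [← zpow_natCast, ← zpow_neg]
          exact zpow_le_zpow_right_of_le_one₀ hp0 hp1.le hc.le
        have h4 : 0 < ‖p‖ ^ N := by positivity
        calc (2 : ℝ) = (2 * ‖p‖ ^ N) * (‖p‖ ^ N)⁻¹ := by field_simp
          _ ≤ ‖b‖ * ‖p‖ ^ n := by gcongr
      have h3 : ‖b * p ^ n‖ / 2 ≤ ‖1 - b * p ^ n‖ := by
        have := norm_sub_norm_le (b * p ^ n) 1
        rw [norm_sub_rev, norm_one] at this
        linarith
      rw [norm_div, div_le_div_iff₀ (by linarith) hb0, norm_zpow]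
      rw [hnz] at h3
      nlinarith
    · have h2 : ‖b * p ^ n‖ ≤ 1 / 2 := by
        rw [hnz]
        have : ‖p‖ ^ n ≤ ‖p‖ ^ N := by
          rw [← zpow_natCast]
          exact zpow_le_zpow_right_of_le_one₀ hp0 hp1.le hc.le
        exact le_trans (by gcongr) hN1
      have h3 : 1 / 2 ≤ ‖1 - b * p ^ n‖ := by
        have := norm_sub_norm_le 1 (b * p ^ n)
        rw [norm_one] at this
        linarith
      rw [norm_div, div_le_div_iff₀ (by linarith) hb0, norm_zpow]
      rw [hnz] at h2
      nlinarith
  have e : (uc p n * p ^ n / (1 - b * p ^ n)) * x ^ n = (p ^ n / (1 - b * p ^ n)) * (uc p n * x ^ n) := by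
    ring
  rw [e, norm_mul]
  exact mul_le_mul_of_nonneg_right key (norm_nonneg _)

/-- The theta function `j(x; p) = ∑ (-1)ⁿ p^{n(n-1)/2} xⁿ`. -/
noncomputable def jt (p x : ℂ) : ℂ := ∑' n : ℤ, uc p n * x ^ n

/-- The derivative `x d/dx` of the theta function. -/
noncomputable def Dj (p x : ℂ) : ℂ := ∑' n : ℤ, (n * uc p n) * x ^ n

/-- The Appell–Lerch sum `∑ (-1)ⁿ p^{n(n+1)/2} xⁿ / (1 - b pⁿ)`. A term with denominator zero is read as
zero. -/
noncomputable def lam (p x b : ℂ) : ℂ := ∑' n : ℤ, (uc p n * p ^ n / (1 - b * p ^ n)) * x ^ n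

/-! ### Product formulas for theta functions and Appell–Lerch sums -/

/-- Summability and value of the Cauchy product of two absolutely summable bilateral series. -/
lemma hasSum_conv {f g : ℤ → ℂ} (hf : Summable fun n => ‖f n‖) (hg : Summable fun n => ‖g n‖) :
    HasSum (fun n => ∑' m, f m * g (n - m)) ((∑' n, f n) * ∑' n, g n) ∧
      ∀ n, Summable fun m => f m * g (n - m) := by
  have h1 := summable_mul_of_summable_norm hf hg
  have h2 := tsum_mul_tsum_of_summable_norm hf hg
  let e : ℤ × ℤ ≃ ℤ × ℤ :=
    { toFun := fun z => (z.2, z.1 - z.2)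
      invFun := fun z => (z.1 + z.2, z.1)
      left_inv := fun z => by ext <;> simp
      right_inv := fun z => by ext <;> simp }
  have h3 : Summable fun z : ℤ × ℤ => f z.2 * g (z.1 - z.2) :=
    (e.summable_iff (f := fun z : ℤ × ℤ => f z.1 * g z.2)).2 h1
  have h4 : ∑' z : ℤ × ℤ, f z.2 * g (z.1 - z.2) = ∑' z : ℤ × ℤ, f z.1 * g z.2 :=
    e.tsum_eq (fun z : ℤ × ℤ => f z.1 * g z.2)
  have h5 : ∀ n, Summable fun m => f m * g (n - m) := fun n => h3.prod_factor n
  refine ⟨?_, h5⟩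
  rw [h2, ← h4]
  exact h3.hasSum.prod_fiberwise (fun n => (h5 n).hasSum)

/-- The recurrence of the theta coefficients determines a bilateral sequence up to a scalar. -/
lemma eq_uc_mul {p : ℂ} (hp : p ≠ 0) {h : ℤ → ℂ} (hh : ∀ n, h (n + 1) = -(p ^ n * h n)) (n : ℤ) :
    h n = uc p n * h 0 := by
  induction n using Int.induction_on with
  | zero => simp [uc_zero]
  | succ i ih => rw [hh, uc_succ hp, ih]; ring
  | pred i ih =>
    have h1 := hh (-(i : ℤ) - 1)
    have h2 := uc_succ hp (-(i : ℤ) - 1)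
    rw [sub_add_cancel] at h1 h2
    rw [h1, h2] at ih
    have h3 : p ^ (-(i : ℤ) - 1) ≠ 0 := zpow_ne_zero _ hp
    have : p ^ (-(i : ℤ) - 1) * h (-(i : ℤ) - 1) =
        p ^ (-(i : ℤ) - 1) * (uc p (-(i : ℤ) - 1) * h 0) := by linear_combination -ih
    exact mul_left_cancel₀ h3 this

lemma sum_uc {p : ℂ} (hp : p ≠ 0) (hp1 : ‖p‖ < 1)
    {x : ℂ} (hx : x ≠ 0) : Summable (fun n : ℤ => uc p n * x ^ n) :=
  (summable_uc hp hp1 hx).of_norm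

lemma sum_nuc {p : ℂ} (hp : p ≠ 0) (hp1 : ‖p‖ < 1)
    {x : ℂ} (hx : x ≠ 0) : Summable (fun n : ℤ => (n * uc p n) * x ^ n) :=
  (summable_nuc hp hp1 hx).of_norm

lemma sum_lam {p : ℂ} (hp : p ≠ 0) (hp1 : ‖p‖ < 1) {x b : ℂ} (hx : x ≠ 0) (hb : b ≠ 0) :
    Summable (fun n : ℤ => (uc p n * p ^ n / (1 - b * p ^ n)) * x ^ n) :=
  (summable_lam hp hp1 hx hb).of_norm

lemma jt_mul {p : ℂ} (hp : p ≠ 0) (hp1 : ‖p‖ < 1)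
    {x : ℂ} (hx : x ≠ 0) : jt p (p * x) = -x⁻¹ * jt p x := by
  unfold jt
  rw [← tsum_mul_left, ← (Equiv.addRight (1 : ℤ)).tsum_eq (fun n : ℤ => -x⁻¹ * (uc p n * x ^ n))]
  refine tsum_congr fun n => ?_
  simp only [Equiv.coe_addRight]
  rw [uc_succ hp, zpow_add₀ hx, zpow_one, mul_zpow]
  field_simp

lemma jt_inv {p : ℂ} (hp : p ≠ 0) (hp1 : ‖p‖ < 1)
    {x : ℂ} (hx : x ≠ 0) : jt p x⁻¹ = -x⁻¹ * jt p x := by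
  rw [← jt_mul hp hp1 hx]
  unfold jt
  rw [← (Equiv.neg ℤ).tsum_eq]
  refine tsum_congr fun n => ?_
  simp only [Equiv.neg_apply]
  rw [uc_neg hp, inv_zpow', neg_neg, mul_zpow]; ring

lemma jt_one {p : ℂ} (hp : p ≠ 0) (hp1 : ‖p‖ < 1) : jt p 1 = 0 := by
  have := jt_inv hp hp1 (x := 1) one_ne_zero
  simp only [inv_one, neg_mul, one_mul] at this
  linear_combination this / 2

lemma Dj_mul {p : ℂ} (hp : p ≠ 0) (hp1 : ‖p‖ < 1)
    {x : ℂ} (hx : x ≠ 0) : Dj p (p * x) = -x⁻¹ * (Dj p x - jt p x) := by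
  unfold jt Dj
  rw [← (sum_nuc hp hp1 hx).tsum_sub (sum_uc hp hp1 hx), ← tsum_mul_left,
    ← (Equiv.addRight (1 : ℤ)).tsum_eq (fun n : ℤ => -x⁻¹ * ((n * uc p n) * x ^ n - uc p n * x ^ n))]
  refine tsum_congr fun n => ?_
  simp only [Equiv.coe_addRight]
  rw [uc_succ hp, zpow_add₀ hx, zpow_one, mul_zpow]
  push_cast
  field_simp
  ring

lemma Dj_inv {p : ℂ} (hp : p ≠ 0) (hp1 : ‖p‖ < 1)
    {x : ℂ} (hx : x ≠ 0) : Dj p x⁻¹ = x⁻¹ * (Dj p x - jt p x) := by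
  have : Dj p x⁻¹ = - Dj p (p * x) := by
    unfold Dj
    rw [← (Equiv.neg ℤ).tsum_eq, ← tsum_neg]
    refine tsum_congr fun n => ?_
    simp only [Equiv.neg_apply]
    rw [uc_neg hp, inv_zpow', neg_neg, mul_zpow]; push_cast; ring
  rw [this, Dj_mul hp hp1 hx]; ring

lemma lam_one_one {p : ℂ} (hp : p ≠ 0) (hp1 : ‖p‖ < 1) : lam p 1 1 = 0 := by
  have : lam p 1 1 = - lam p 1 1 := by
    conv_lhs => rw [lam, ← (Equiv.neg ℤ).tsum_eq]
    rw [lam, ← tsum_neg]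
    refine tsum_congr fun n => ?_
    simp only [Equiv.neg_apply]
    rw [uc_neg hp]
    simp only [one_zpow, mul_one, one_mul, zpow_neg]
    have h3 : p ^ n ≠ 0 := zpow_ne_zero _ hp
    by_cases h : p ^ n = 1
    · simp [h]
    · have h1 : 1 - p ^ n ≠ 0 := sub_ne_zero.2 (Ne.symm h)
      have h2 : p ^ n - 1 ≠ 0 := sub_ne_zero.2 h
      have : 1 - (p ^ n)⁻¹ = (p ^ n - 1) / p ^ n := by field_simp
      rw [this, ← neg_sub (p ^ n) 1]
      field_simp
  linear_combination this / 2

lemma zpow_ne_one' {p : ℂ} (hp : p ≠ 0) (hp1 : ‖p‖ < 1) {n : ℤ} (hn : n ≠ 0) : p ^ n ≠ 1 := by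
  intro h
  have h1 : ‖p‖ ^ n = 1 := by rw [← norm_zpow, h, norm_one]
  rw [zpow_eq_one_iff_right₀ (norm_nonneg _) hp1.ne] at h1
  exact hn h1

/-- Shift lemma for the Laurent coefficients, in the variable `x`, of the product of the theta function at
`x / b1` with the Appell–Lerch sum at `x / b2` whose coefficients are `v`. The number `d` accounts for an
omitted singular term at index `0`. -/
lemma conv_shift {p : ℂ} (hp : p ≠ 0) (hp1 : ‖p‖ < 1)
    {b1 b2 : ℂ} (hb1 : b1 ≠ 0) (hb2 : b2 ≠ 0) {v : ℤ → ℂ}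
    (hs : Summable fun n => ‖v n * (b2⁻¹) ^ n‖) {d : ℂ}
    (hv : ∀ l, v l * (1 - b1 * p ^ l) = uc p l * p ^ l - if l = 0 then d else 0) (n : ℤ) :
    (∑' m, (uc p m * b1⁻¹ ^ m) * (v (n + 1 - m) * b2⁻¹ ^ (n + 1 - m))) =
      -(p ^ n * ∑' m, (uc p m * b1⁻¹ ^ m) * (v (n - m) * b2⁻¹ ^ (n - m)))
      - b1⁻¹ * (p ^ n * ∑' m, (uc p m * b1⁻¹ ^ m) * (uc p (n - m) * b2⁻¹ ^ (n - m)))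
      + b1⁻¹ * d * (p ^ n * uc p n * b1⁻¹ ^ n) := by
  have hb1' := inv_ne_zero hb1
  have hb2' := inv_ne_zero hb2
  have c1 := (hasSum_conv (summable_uc hp hp1 hb1') hs).2 n
  have c2 := (hasSum_conv (summable_uc hp hp1 hb1') (summable_uc hp hp1 hb2')).2 n
  have c3 : HasSum (fun m => if m = n then b1⁻¹ * d * (p ^ n * uc p n * b1⁻¹ ^ n) else 0)
      (b1⁻¹ * d * (p ^ n * uc p n * b1⁻¹ ^ n)) := by
    convert hasSum_ite_eq n _ using 1
  rw [← (Equiv.addRight (1 : ℤ)).tsum_eq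
    (fun m => (uc p m * b1⁻¹ ^ m) * (v (n + 1 - m) * b2⁻¹ ^ (n + 1 - m)))]
  refine HasSum.tsum_eq ?_
  have := (((c1.hasSum.mul_left (p ^ n)).neg.sub ((c2.hasSum.mul_left (p ^ n)).mul_left b1⁻¹))).add c3
  refine this.congr_fun fun m => ?_
  simp only [Equiv.coe_addRight]
  have e1 : n + 1 - (m + 1) = n - m := by ring
  rw [e1, uc_succ hp, zpow_add₀ hb1', zpow_one]
  have h := hv (n - m)
  have e2 : p ^ n = p ^ m * p ^ (n - m) := by rw [← zpow_add₀ hp]; congr 1; ring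
  by_cases hm : m = n
  · subst hm
    simp only [sub_self, zpow_zero, if_true, mul_one] at h ⊢
    linear_combination (-(uc p m * p ^ m * b1⁻¹ ^ m * b1⁻¹)) * h
      - uc p m * p ^ m * b1⁻¹ ^ m * v 0 * mul_inv_cancel₀ hb1
  · rw [if_neg hm, e2]
    rw [if_neg (by omega : ¬ (n - m = 0))] at h
    linear_combination (-(uc p m * p ^ m * b1⁻¹ ^ m * b1⁻¹ * b2⁻¹ ^ (n - m))) * h
      - uc p m * p ^ m * b1⁻¹ ^ m * v (n - m) * b2⁻¹ ^ (n - m) * p ^ (n - m) * mul_inv_cancel₀ hb1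

/-- Change of the parameter `b` in an Appell–Lerch sum. As functions of `a`, the bracket on the left and
`jt p a` have Laurent coefficients obeying the same first-order recurrence, so they are proportional;
the constant is found at `a = b2`. -/
lemma gauge0 {p : ℂ} (hp : p ≠ 0) (hp1 : ‖p‖ < 1)
    {a b1 b2 : ℂ} (ha : a ≠ 0) (hb1 : b1 ≠ 0) (hb2 : b2 ≠ 0)
    (h1 : ∀ l : ℤ, 1 - b1 * p ^ l ≠ 0) (h2 : ∀ l : ℤ, 1 - b2 * p ^ l ≠ 0) :
    jt p b2 * (b1 * (jt p (a / b1) * lam p (a / b2) b1) - b2 * (jt p (a / b2) * lam p (a / b1) b2))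
      = b1 * jt p (b2 / b1) * lam p 1 b1 * jt p a := by
  have hb1' := inv_ne_zero hb1
  have hb2' := inv_ne_zero hb2
  set v1 : ℤ → ℂ := fun n => uc p n * p ^ n / (1 - b1 * p ^ n) with hv1
  set v2 : ℤ → ℂ := fun n => uc p n * p ^ n / (1 - b2 * p ^ n) with hv2
  set F : ℤ → ℂ := fun n => b1 * (∑' m, (uc p m * b1⁻¹ ^ m) * (v1 (n - m) * b2⁻¹ ^ (n - m)))
    - b2 * (∑' m, (uc p m * b2⁻¹ ^ m) * (v2 (n - m) * b1⁻¹ ^ (n - m))) with hF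
  have sym : ∀ n, (∑' m, (uc p m * b1⁻¹ ^ m) * (uc p (n - m) * b2⁻¹ ^ (n - m))) =
      ∑' m, (uc p m * b2⁻¹ ^ m) * (uc p (n - m) * b1⁻¹ ^ (n - m)) := by
    intro n
    rw [← (Equiv.subLeft n).tsum_eq]
    refine tsum_congr fun m => ?_
    simp only [Equiv.subLeft_apply, sub_sub_cancel]; ring
  have hrec : ∀ n, F (n + 1) = -(p ^ n * F n) := by
    intro n
    simp only [hF]
    rw [conv_shift hp hp1 hb1 hb2 (v := v1) (d := 0) (summable_lam hp hp1 hb2' hb1)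
      (fun l => by simp only [hv1, ite_self, sub_zero]; rw [div_mul_cancel₀ _ (h1 l)]),
      conv_shift hp hp1 hb2 hb1 (v := v2) (d := 0) (summable_lam hp hp1 hb1' hb2)
      (fun l => by simp only [hv2, ite_self, sub_zero]; rw [div_mul_cancel₀ _ (h2 l)]), sym]
    field_simp
    ring
  have hsum : ∀ c : ℂ, c ≠ 0 →
      b1 * (jt p (c / b1) * lam p (c / b2) b1) - b2 * (jt p (c / b2) * lam p (c / b1) b2)
        = F 0 * jt p c := by
    intro c hc
    have s1 := (hasSum_conv (summable_uc hp hp1 (div_ne_zero hc hb1))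
      (summable_lam hp hp1 (div_ne_zero hc hb2) hb1)).1
    have s2 := (hasSum_conv (summable_uc hp hp1 (div_ne_zero hc hb2))
      (summable_lam hp hp1 (div_ne_zero hc hb1) hb2)).1
    have s3 := (s1.mul_left b1).sub (s2.mul_left b2)
    have s4 := (sum_uc hp hp1 hc).hasSum.mul_left (F 0)
    refine s3.unique (s4.congr_fun fun n => ?_)
    have e := eq_uc_mul hp hrec n
    have e' : F 0 * (uc p n * c ^ n) = c ^ n * F n := by rw [e]; ring
    rw [e']
    simp only [hF, mul_sub, ← tsum_mul_left]
    congr 1 <;>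
    · refine tsum_congr fun m => ?_
      rw [div_zpow, div_zpow, inv_zpow, inv_zpow]
      have : c ^ n = c ^ m * c ^ (n - m) := by rw [← zpow_add₀ hc]; congr 1; ring
      rw [this]; simp only [hv1, hv2]; ring
  have ea := hsum a ha
  have eb := hsum b2 hb2
  rw [div_self hb2, jt_one hp hp1] at eb
  rw [ea]
  linear_combination (-jt p a) * eb

/-- The analogue of `gauge0` for `b1 = 1`, where the omission of the singular term of `lam p _ 1` is
compensated by `Dj`. The constant of proportionality is found at `a = b`. -/
lemma hcirc {p : ℂ} (hp : p ≠ 0) (hp1 : ‖p‖ < 1)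
    {a b : ℂ} (ha : a ≠ 0) (hb : b ≠ 0) (h1 : ∀ l : ℤ, 1 - b * p ^ l ≠ 0) :
    jt p b * (jt p a * lam p (a / b) 1 + Dj p a - b * (jt p (a / b) * lam p a b))
      = Dj p b * jt p a := by
  have hb' := inv_ne_zero hb
  set v1 : ℤ → ℂ := fun n => uc p n * p ^ n / (1 - 1 * p ^ n) with hv1
  set v2 : ℤ → ℂ := fun n => uc p n * p ^ n / (1 - b * p ^ n) with hv2
  set F : ℤ → ℂ := fun n => (∑' m, (uc p m * (1 : ℂ)⁻¹ ^ m) * (v1 (n - m) * b⁻¹ ^ (n - m))) + n * uc p n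
    - b * (∑' m, (uc p m * b⁻¹ ^ m) * (v2 (n - m) * (1 : ℂ)⁻¹ ^ (n - m))) with hF
  have sym : ∀ n, (∑' m, (uc p m * (1 : ℂ)⁻¹ ^ m) * (uc p (n - m) * b⁻¹ ^ (n - m))) =
      ∑' m, (uc p m * b⁻¹ ^ m) * (uc p (n - m) * (1 : ℂ)⁻¹ ^ (n - m)) := by
    intro n
    rw [← (Equiv.subLeft n).tsum_eq]
    refine tsum_congr fun m => ?_
    simp only [Equiv.subLeft_apply, sub_sub_cancel]; ring
  have hrec : ∀ n, F (n + 1) = -(p ^ n * F n) := by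
    intro n
    simp only [hF]
    rw [conv_shift hp hp1 one_ne_zero hb (v := v1) (d := 1) (summable_lam hp hp1 hb' one_ne_zero)
      (fun l => by
        simp only [hv1]
        by_cases hl : l = 0
        · subst hl; simp [uc_zero]
        · rw [if_neg hl, sub_zero, div_mul_cancel₀]
          rw [one_mul]
          exact sub_ne_zero.2 (zpow_ne_one' hp hp1 hl).symm),
      conv_shift hp hp1 hb one_ne_zero (v := v2) (d := 0)
      (summable_lam hp hp1 (inv_ne_zero one_ne_zero) hb)
      (fun l => by simp only [hv2, ite_self, sub_zero]; rw [div_mul_cancel₀ _ (h1 l)]), sym,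
      uc_succ hp]
    simp only [inv_one, one_zpow, mul_one, one_mul]
    push_cast
    field_simp
    ring
  have hsum : ∀ c : ℂ, c ≠ 0 →
      jt p (c / 1) * lam p (c / b) 1 + Dj p c - b * (jt p (c / b) * lam p (c / 1) b)
        = F 0 * jt p c := by
    intro c hc
    have s1 := (hasSum_conv (summable_uc hp hp1 (div_ne_zero hc one_ne_zero))
      (summable_lam hp hp1 (div_ne_zero hc hb) one_ne_zero)).1
    have s2 := (hasSum_conv (summable_uc hp hp1 (div_ne_zero hc hb))
      (summable_lam hp hp1 (div_ne_zero hc one_ne_zero) hb)).1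
    have s3 := (s1.add (sum_nuc hp hp1 hc).hasSum).sub (s2.mul_left b)
    have s4 := (sum_uc hp hp1 hc).hasSum.mul_left (F 0)
    refine s3.unique (s4.congr_fun fun n => ?_)
    have e := eq_uc_mul hp hrec n
    have e' : F 0 * (uc p n * c ^ n) = c ^ n * F n := by rw [e]; ring
    rw [e']
    simp only [hF, mul_sub, mul_add, ← tsum_mul_left]
    congr 1
    congr 1
    · refine tsum_congr fun m => ?_
      rw [div_zpow, div_zpow, inv_zpow, inv_zpow]
      have : c ^ n = c ^ m * c ^ (n - m) := by rw [← zpow_add₀ hc]; congr 1; ring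
      rw [this]; simp only [hv1]; ring
    · ring
    · refine tsum_congr fun m => ?_
      rw [div_zpow, div_zpow, inv_zpow, inv_zpow]
      have : c ^ n = c ^ m * c ^ (n - m) := by rw [← zpow_add₀ hc]; congr 1; ring
      rw [this]; simp only [hv2]; ring
  have ea := hsum a ha
  have eb := hsum b hb
  rw [div_self hb, jt_one hp hp1, lam_one_one hp hp1] at eb
  rw [div_one] at ea
  rw [ea]
  linear_combination (-jt p a) * eb

/-! ### Specialization to powers of one base -/

/-- Partial fractions for the reciprocal of a theta function. -/
lemma jt_mul_lam_one {p : ℂ} (hp : p ≠ 0) (hp1 : ‖p‖ < 1) {b : ℂ} (hb : b ≠ 0)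
    (h1 : ∀ l : ℤ, 1 - b * p ^ l ≠ 0) (hj : jt p b ≠ 0) : jt p b * lam p 1 b = -Dj p 1 := by
  have h := hcirc hp hp1 one_ne_zero hb h1
  rw [jt_one hp hp1, one_div, jt_inv hp hp1 hb] at h
  have h2 : jt p b * (jt p b * lam p 1 b) = jt p b * (-Dj p 1) := by
    field_simp at h
    linear_combination h
  exact mul_left_cancel₀ hj h2

/-- `gauge0` with the constant `lam p 1 b1` evaluated by `jt_mul_lam_one`. -/
lemma gauge {p : ℂ} (hp : p ≠ 0) (hp1 : ‖p‖ < 1) {x b1 b2 : ℂ} (hx : x ≠ 0) (hb1 : b1 ≠ 0)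
    (hb2 : b2 ≠ 0) (h1 : ∀ l : ℤ, 1 - b1 * p ^ l ≠ 0) (h2 : ∀ l : ℤ, 1 - b2 * p ^ l ≠ 0)
    (hj : jt p b1 ≠ 0) :
    jt p b1 * jt p b2 * (b1 * (jt p (x * b2) * lam p (x * b1) b1)
        - b2 * (jt p (x * b1) * lam p (x * b2) b2))
      = b1 * (-Dj p 1) * jt p (b2 / b1) * jt p (x * b1 * b2) := by
  have h := gauge0 hp hp1 (a := x * b1 * b2) (mul_ne_zero (mul_ne_zero hx hb1) hb2) hb1 hb2 h1 h2
  have e1 : x * b1 * b2 / b1 = x * b2 := by field_simp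
  have e2 : x * b1 * b2 / b2 = x * b1 := by field_simp
  rw [e1, e2] at h
  have h3 := jt_mul_lam_one hp hp1 hb1 h1 hj
  linear_combination jt p b1 * h + b1 * jt p (b2 / b1) * jt p (x * b1 * b2) * h3

/-- Theta values `j(s Yⁱ; Y⁵)`. -/
noncomputable def J (Y s : ℂ) (i : ℤ) : ℂ := jt (Y ^ 5) (s * Y ^ i)
/-- The values of `x d/dx j(x; Y⁵)` at `x = s Yⁱ`. -/
noncomputable def DJ (Y s : ℂ) (i : ℤ) : ℂ := Dj (Y ^ 5) (s * Y ^ i)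
/-- The values of the Appell–Lerch sum in base `Y⁵` at `x = s Yⁱ`, `b = Y^c`. For `c = 0` the term
with index `0` has denominator zero, and is therefore omitted from the sum. -/
noncomputable def La (Y s : ℂ) (i c : ℤ) : ℂ := lam (Y ^ 5) (s * Y ^ i) (Y ^ c)
/-- The constant `-(x d/dx j(x; Y⁵))` at `x = 1`. -/
noncomputable def kap (Y : ℂ) : ℂ := -Dj (Y ^ 5) 1

lemma p_ne {Y : ℂ} (hY : Y ≠ 0) (hY1 : ‖Y‖ < 1) : Y ^ 5 ≠ 0 := pow_ne_zero _ hY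

lemma p_lt {Y : ℂ} (hY : Y ≠ 0) (hY1 : ‖Y‖ < 1) : ‖Y ^ 5‖ < 1 := by
  rw [norm_pow]; exact pow_lt_one₀ (norm_nonneg _) hY1 (by norm_num)

lemma den_ne {Y : ℂ} (hY : Y ≠ 0) (hY1 : ‖Y‖ < 1)
    {c : ℤ} (hc : ¬ (5 : ℤ) ∣ c) (l : ℤ) : 1 - Y ^ c * (Y ^ 5) ^ l ≠ 0 := by
  have e : Y ^ c * (Y ^ 5) ^ l = Y ^ (c + 5 * l) := by
    rw [zpow_add₀ hY, zpow_mul]; norm_cast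
  rw [e]
  refine sub_ne_zero.2 (zpow_ne_one' hY hY1 ?_).symm
  omega

lemma J_add5 {Y : ℂ} (hY : Y ≠ 0) (hY1 : ‖Y‖ < 1)
    {s : ℂ} (hs : s ≠ 0) (i : ℤ) : J Y s (i + 5) = -(s * Y ^ i)⁻¹ * J Y s i := by
  unfold J
  rw [← jt_mul (p_ne hY hY1) (p_lt hY hY1) (mul_ne_zero hs (zpow_ne_zero _ hY)), zpow_add₀ hY]
  congr 1
  norm_cast; ring

lemma J_neg {Y : ℂ} (hY : Y ≠ 0) (hY1 : ‖Y‖ < 1)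
    {s : ℂ} (hs : s * s = 1) (i : ℤ) : J Y s (-i) = -(s * Y ^ i)⁻¹ * J Y s i := by
  have hs0 : s ≠ 0 := fun h => by simp [h] at hs
  unfold J
  rw [← jt_inv (p_ne hY hY1) (p_lt hY hY1) (mul_ne_zero hs0 (zpow_ne_zero _ hY)), zpow_neg, mul_inv]
  congr 2
  rw [eq_comm, inv_eq_iff_eq_inv]; exact (eq_inv_of_mul_eq_one_left hs)

lemma DJ_neg {Y : ℂ} (hY : Y ≠ 0) (hY1 : ‖Y‖ < 1) {s : ℂ} (hs : s * s = 1) (i : ℤ) :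
    DJ Y s (-i) = (s * Y ^ i)⁻¹ * (DJ Y s i - J Y s i) := by
  have hs0 : s ≠ 0 := fun h => by simp [h] at hs
  unfold J DJ
  rw [← Dj_inv (p_ne hY hY1) (p_lt hY hY1) (mul_ne_zero hs0 (zpow_ne_zero _ hY)), zpow_neg, mul_inv]
  congr 2
  rw [eq_comm, inv_eq_iff_eq_inv]; exact (eq_inv_of_mul_eq_one_left hs)

lemma DJ_add5 {Y : ℂ} (hY : Y ≠ 0) (hY1 : ‖Y‖ < 1) {s : ℂ} (hs : s ≠ 0) (i : ℤ) :
    DJ Y s (i + 5) = -(s * Y ^ i)⁻¹ * (DJ Y s i - J Y s i) := by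
  unfold J DJ
  rw [← Dj_mul (p_ne hY hY1) (p_lt hY hY1) (mul_ne_zero hs (zpow_ne_zero _ hY)), zpow_add₀ hY]
  congr 1
  norm_cast; ring

lemma hcircZ {Y : ℂ} (hY : Y ≠ 0) (hY1 : ‖Y‖ < 1)
    {s : ℂ} (hs : s ≠ 0) (e c : ℤ) (hc : ¬ (5 : ℤ) ∣ c) :
    J Y 1 c * (J Y s (e + c) * La Y s e 0 + DJ Y s (e + c) - Y ^ c * (J Y s e * La Y s (e + c) c))
      = DJ Y 1 c * J Y s (e + c) := by
  have h := hcirc (p_ne hY hY1) (p_lt hY hY1) (a := s * Y ^ (e + c)) (b := Y ^ c)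
    (mul_ne_zero hs (zpow_ne_zero _ hY)) (zpow_ne_zero _ hY) (den_ne hY hY1 hc)
  have e1 : s * Y ^ (e + c) / Y ^ c = s * Y ^ e := by
    rw [zpow_add₀ hY]; have := zpow_ne_zero c hY; field_simp
  rw [e1] at h
  simpa [J, DJ, La] using h

lemma gaugeZ {Y : ℂ} (hY : Y ≠ 0) (hY1 : ‖Y‖ < 1)
    {s : ℂ} (hs : s ≠ 0) (e c1 c2 : ℤ) (hc1 : ¬ (5 : ℤ) ∣ c1) (hc2 : ¬ (5 : ℤ) ∣ c2)
    (hj : J Y 1 c1 ≠ 0) :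
    J Y 1 c1 * J Y 1 c2 * (Y ^ c1 * (J Y s (e + c2) * La Y s (e + c1) c1)
        - Y ^ c2 * (J Y s (e + c1) * La Y s (e + c2) c2))
      = Y ^ c1 * kap Y * J Y 1 (c2 - c1) * J Y s (e + c1 + c2) := by
  have h := gauge (p_ne hY hY1) (p_lt hY hY1) (x := s * Y ^ e) (b1 := Y ^ c1) (b2 := Y ^ c2)
    (mul_ne_zero hs (zpow_ne_zero _ hY)) (zpow_ne_zero _ hY) (zpow_ne_zero _ hY)
    (den_ne hY hY1 hc1) (den_ne hY hY1 hc2) (by simpa [J] using hj)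
  simpa [J, La, kap, zpow_add₀ hY, zpow_sub₀ hY, mul_assoc] using h

/-- The three-term relation for theta functions, obtained by eliminating the Appell–Lerch sums from
three instances of `gaugeZ`. The factor `kap Y` is not cancelled. -/
lemma threeZ {Y : ℂ} (hY : Y ≠ 0) (hY1 : ‖Y‖ < 1)
    {s : ℂ} (hs : s ≠ 0) (e c1 c2 c3 : ℤ) (hc1 : ¬ (5 : ℤ) ∣ c1) (hc2 : ¬ (5 : ℤ) ∣ c2)
    (hc3 : ¬ (5 : ℤ) ∣ c3) (hj1 : J Y 1 c1 ≠ 0) (hj2 : J Y 1 c2 ≠ 0) :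
    kap Y * (Y ^ c1 * J Y 1 (c2 - c1) * J Y s (e + c1 + c2) * J Y 1 c3 * J Y s (e + c3)
      + Y ^ c2 * J Y 1 (c3 - c2) * J Y s (e + c2 + c3) * J Y 1 c1 * J Y s (e + c1)
      - Y ^ c1 * J Y 1 (c3 - c1) * J Y s (e + c1 + c3) * J Y 1 c2 * J Y s (e + c2)) = 0 := by
  have g12 := gaugeZ hY hY1 hs e c1 c2 hc1 hc2 hj1
  have g23 := gaugeZ hY hY1 hs e c2 c3 hc2 hc3 hj2
  have g13 := gaugeZ hY hY1 hs e c1 c3 hc1 hc3 hj1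
  linear_combination (-(J Y 1 c3 * J Y s (e + c3))) * g12 - J Y 1 c1 * J Y s (e + c1) * g23
    + J Y 1 c2 * J Y s (e + c2) * g13

/-- The four-term relation between logarithmic derivatives of theta functions. -/
lemma fourZ {Y : ℂ} (hY : Y ≠ 0) (hY1 : ‖Y‖ < 1)
    (e c2 c3 : ℤ) (hc2 : ¬ (5 : ℤ) ∣ c2) (hc3 : ¬ (5 : ℤ) ∣ c3)
    (h2 : J Y 1 c2 ≠ 0) (h3 : J Y 1 c3 ≠ 0) (h4 : J Y 1 (e + c2) ≠ 0) (h5 : J Y 1 (e + c3) ≠ 0) :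
    DJ Y 1 c2 / J Y 1 c2 - DJ Y 1 (e + c2) / J Y 1 (e + c2) - DJ Y 1 c3 / J Y 1 c3
      + DJ Y 1 (e + c3) / J Y 1 (e + c3) =
    -(Y ^ c2 * kap Y * J Y 1 e * J Y 1 (c3 - c2) * J Y 1 (e + c2 + c3)) /
      (J Y 1 (e + c2) * J Y 1 (e + c3) * J Y 1 c2 * J Y 1 c3) := by
  have a2 := hcircZ hY hY1 one_ne_zero e c2 hc2
  have a3 := hcircZ hY hY1 one_ne_zero e c3 hc3
  have g := gaugeZ hY hY1 one_ne_zero e c2 c3 hc2 hc3 h2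
  field_simp
  linear_combination (-(J Y 1 c3 * J Y 1 (e + c3))) * a2 + J Y 1 c2 * J Y 1 (e + c2) * a3
    - J Y 1 e * g

/-! ### The theta function `psi` -/

/-- A bilateral series with constant term `1` whose other terms are dominated by distinct positive
powers of some `r < 1/2` does not vanish. -/
lemma tsum_ne_zero_of_bound {f : ℤ → ℂ} {r : ℝ} (hr0 : 0 ≤ r) (hr : r < 1 / 2)
    (hf : f 0 = 1) (h1 : ∀ n : ℕ, ‖f (n + 1)‖ ≤ r ^ (2 * n + 1))
    (h2 : ∀ n : ℕ, ‖f (-(n + 1))‖ ≤ r ^ (2 * n + 2)) : (∑' n, f n) ≠ 0 := by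
  have hr1 : r ^ 2 < 1 := by nlinarith
  have hg := hasSum_geometric_of_lt_one (sq_nonneg r) hr1
  have g1 : HasSum (fun n : ℕ => r ^ (2 * n + 1)) (r * (1 - r ^ 2)⁻¹) := by
    refine (hg.mul_left r).congr_fun fun n => ?_
    rw [pow_succ, pow_mul]; ring
  have g2 : HasSum (fun n : ℕ => r ^ (2 * n + 2)) (r ^ 2 * (1 - r ^ 2)⁻¹) := by
    refine (hg.mul_left (r ^ 2)).congr_fun fun n => ?_
    rw [pow_add, pow_mul]; ring
  have s1 : Summable fun n : ℕ => f (n + 1) := Summable.of_norm_bounded g1.summable h1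
  have s2 : Summable fun n : ℕ => f (-(n + 1)) := Summable.of_norm_bounded g2.summable h2
  have b1 : ‖∑' n : ℕ, f (n + 1)‖ ≤ r * (1 - r ^ 2)⁻¹ := tsum_of_norm_bounded g1 h1
  have b2 : ‖∑' n : ℕ, f (-(n + 1))‖ ≤ r ^ 2 * (1 - r ^ 2)⁻¹ := tsum_of_norm_bounded g2 h2
  have e : ∑' n, f n = (∑' n : ℕ, f (n + 1)) + 1 + ∑' n : ℕ, f (-(n + 1)) := by
    rw [← hf]
    exact (s1.hasSum.of_add_one_of_neg_add_one s2.hasSum).tsum_eq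
  intro h0
  rw [h0] at e
  have e1 : (1 : ℂ) = -((∑' n : ℕ, f (n + 1)) + ∑' n : ℕ, f (-(n + 1))) := by linear_combination -e
  have e2 : (1 : ℝ) ≤ r * (1 - r ^ 2)⁻¹ + r ^ 2 * (1 - r ^ 2)⁻¹ := by
    calc (1 : ℝ) = ‖(1 : ℂ)‖ := by simp
      _ = ‖(∑' n : ℕ, f (n + 1)) + ∑' n : ℕ, f (-(n + 1))‖ := by rw [e1, norm_neg]
      _ ≤ _ := (norm_add_le _ _).trans (add_le_add b1 b2)
  have : r * (1 - r ^ 2)⁻¹ + r ^ 2 * (1 - r ^ 2)⁻¹ = r / (1 - r) := by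
    have h3 : 1 - r ≠ 0 := by linarith
    have h4 : 1 - r ^ 2 ≠ 0 := by linarith
    rw [eq_div_iff h3]; field_simp; ring
  rw [this, le_div_iff₀ (by linarith)] at e2
  linarith

/-- `ψ(Q) = ∑ Q^{i(2i-1)}`, the generating function of the triangular numbers. -/
noncomputable def psi (Q : ℂ) : ℂ := ∑' i : ℤ, Q ^ (i * (2 * i - 1))

lemma zpow_norm_le {Y : ℂ} (hY : Y ≠ 0) (hY1 : ‖Y‖ < 1 / 2) {e : ℤ} {k : ℕ} (h : (k : ℤ) ≤ e) :
    ‖Y ^ e‖ ≤ ‖Y‖ ^ k := by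
  rw [norm_zpow, ← zpow_natCast]
  exact zpow_le_zpow_right_of_le_one₀ (norm_pos_iff.2 hY) (by linarith) h

/-- `ψ` has no zeros in the punctured disc of radius `1/2`, so that it can be cancelled. -/
lemma psi_ne {Q : ℂ} (hQ : Q ≠ 0) (hQ1 : ‖Q‖ < 1 / 2) : psi Q ≠ 0 := by
  refine tsum_ne_zero_of_bound (norm_nonneg Q) hQ1 (by simp) (fun n => ?_) (fun n => ?_)
  · exact zpow_norm_le hQ hQ1 (by push_cast; nlinarith)
  · exact zpow_norm_le hQ hQ1 (by push_cast; nlinarith)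

lemma norm_uc_mul {Y s : ℂ} (hY : Y ≠ 0) (hs : ‖s‖ = 1) (i n : ℤ) :
    ‖uc (Y ^ 5) n * (s * Y ^ i) ^ n‖ = ‖Y ^ (5 * tri n + i * n)‖ := by
  unfold uc
  rw [mul_zpow, zpow_add₀ hY, zpow_mul Y 5, zpow_mul Y i]
  simp only [norm_mul, norm_zpow, norm_neg, norm_one, one_zpow, one_mul, hs]
  norm_cast
  rw [norm_pow]

lemma J_ne {Y s : ℂ} (hY : Y ≠ 0) (hY1 : ‖Y‖ < 1 / 2) (hs : ‖s‖ = 1) {i : ℤ} (hi : i = 1 ∨ i = 2) :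
    J Y s i ≠ 0 := by
  refine tsum_ne_zero_of_bound (norm_nonneg Y) hY1 (by simp [uc_zero]) (fun n => ?_) (fun n => ?_)
  · rw [norm_uc_mul hY hs]
    refine zpow_norm_le hY hY1 ?_
    have := two_mul_tri ((n : ℤ) + 1)
    push_cast
    rcases hi with rfl | rfl <;> nlinarith
  · rw [norm_uc_mul hY hs]
    refine zpow_norm_le hY hY1 ?_
    have := two_mul_tri (-((n : ℤ) + 1))
    push_cast
    rcases hi with rfl | rfl <;> nlinarith

lemma sum_tri {Q : ℂ} (hQ : Q ≠ 0) (hQ1 : ‖Q‖ < 1) : Summable fun n : ℤ => Q ^ tri n := by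
  refine (sum_uc hQ hQ1 (x := -1) (by norm_num)).congr fun n => ?_
  unfold uc
  rw [mul_assoc, mul_comm, mul_assoc, ← mul_zpow]; simp

/-- Splitting a bilateral series into even and odd indices. -/
lemma tsum_even_odd {f : ℤ → ℂ} (hf : Summable f) :
    ∑' n, f n = (∑' i, f (2 * i)) + ∑' i, f (1 - 2 * i) := by
  have e1 : Function.Injective fun i : ℤ => 2 * i := fun a b h => by simpa using h
  have e2 : Function.Injective fun i : ℤ => 1 - 2 * i := fun a b h => by simpa using h
  have h1 : HasSum (f ∘ ((↑) : Set.range (fun i : ℤ => 2 * i) → ℤ)) (∑' i, f (2 * i)) :=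
    e1.hasSum_range_iff.2 (hf.comp_injective e1).hasSum
  have h2 : HasSum (f ∘ ((↑) : Set.range (fun i : ℤ => 1 - 2 * i) → ℤ)) (∑' i, f (1 - 2 * i)) :=
    e2.hasSum_range_iff.2 (hf.comp_injective e2).hasSum
  refine (h1.add_isCompl ?_ h2).tsum_eq
  constructor
  · rw [Set.disjoint_iff]
    rintro x ⟨⟨a, rfl⟩, ⟨b, hb⟩⟩
    simp only at hb; omega
  · rw [codisjoint_iff_le_sup]
    intro x _
    rcases Int.even_or_odd' x with ⟨k, hk | hk⟩
    · left; exact ⟨k, hk.symm⟩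
    · right; exact ⟨-k, by simp only; omega⟩

lemma tsum_tri {Q : ℂ} (hQ : Q ≠ 0) (hQ1 : ‖Q‖ < 1) : ∑' n : ℤ, Q ^ tri n = 2 * psi Q := by
  rw [tsum_even_odd (sum_tri hQ hQ1), two_mul]
  unfold psi
  congr 1 <;>
  · refine tsum_congr fun i => ?_
    congr 1
    first
    | (have := two_mul_tri (2 * i); nlinarith)
    | (have := two_mul_tri (1 - 2 * i); nlinarith)

lemma J_zero_eq {Y : ℂ} (hY : Y ≠ 0) (hY1 : ‖Y‖ < 1) : J Y (-1) 0 = 2 * psi (Y ^ 5) := by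
  rw [← tsum_tri (p_ne hY hY1) (p_lt hY hY1)]
  refine tsum_congr fun n => ?_
  unfold uc
  rw [mul_assoc, mul_comm, mul_assoc, zpow_zero, mul_one, ← mul_zpow]; simp

/-! ### Numerical data of the five theta values -/

/-- The values of the theta functions at powers of `Y`, reduced to the constants `t`, `u` (for
`s = 1`) and `A`, `B`, `C` (for `s = -1`), with the constant `κ` and the derivatives `d1`, `d2`. -/
structure ThetaVals (Y t u A B C κ d1 d2 : ℂ) : Prop where
  hY : Y ≠ 0
  ht : t ≠ 0
  hu : u ≠ 0
  hA : A ≠ 0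
  hB : B ≠ 0
  hC : C ≠ 0
  hκ : kap Y = κ
  v1 : J Y 1 1 = t
  v2 : J Y 1 2 = u
  v3 : J Y 1 3 = u
  v4 : J Y 1 4 = t
  v6 : J Y 1 6 = -t / Y
  vm1 : J Y 1 (-1) = -t / Y
  vm2 : J Y 1 (-2) = -u / Y ^ 2
  vm3 : J Y 1 (-3) = -u / Y ^ 3
  vm4 : J Y 1 (-4) = -t / Y ^ 4
  w0 : J Y (-1) 0 = 2 * C
  w1 : J Y (-1) 1 = B
  w2 : J Y (-1) 2 = A
  w3 : J Y (-1) 3 = A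
  w4 : J Y (-1) 4 = B
  wm1 : J Y (-1) (-1) = B / Y
  wm2 : J Y (-1) (-2) = A / Y ^ 2
  wm3 : J Y (-1) (-3) = A / Y ^ 3
  wm4 : J Y (-1) (-4) = B / Y ^ 4
  wm5 : J Y (-1) (-5) = 2 * C / Y ^ 5
  D0 : DJ Y (-1) 0 = C
  D1 : DJ Y 1 1 = d1
  D2 : DJ Y 1 2 = d2
  Dm1 : DJ Y 1 (-1) = (d1 - t) / Y
  Dm2 : DJ Y 1 (-2) = (d2 - u) / Y ^ 2
  Dm3 : DJ Y 1 (-3) = -(u + d2) / Y ^ 3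
  D4 : DJ Y 1 4 = -d1
  D6 : DJ Y 1 6 = -(d1 - t) / Y

/-- Quasi-periodicity and inversion reduce all theta values to those listed. -/
lemma thetaVals {Y : ℂ} (hY : Y ≠ 0) (hY1 : ‖Y‖ < 1 / 2) :
    ThetaVals Y (J Y 1 1) (J Y 1 2) (J Y (-1) 2) (J Y (-1) 1) (psi (Y ^ 5)) (kap Y)
      (DJ Y 1 1) (DJ Y 1 2) := by
  have hY2 : ‖Y‖ < 1 := by linarith
  have h1 : (1 : ℂ) ≠ 0 := one_ne_zero
  have hm : (-1 : ℂ) ≠ 0 := by norm_num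
  have q1 : (1 : ℂ) * 1 = 1 := by norm_num
  have qm : (-1 : ℂ) * (-1) = 1 := by norm_num
  have a1 := J_add5 hY hY2 h1
  have am := J_add5 hY hY2 hm
  have n1 := J_neg hY hY2 q1
  have nm := J_neg hY hY2 qm
  have da1 := DJ_add5 hY hY2 h1
  have dn1 := DJ_neg hY hY2 q1
  have dnm := DJ_neg hY hY2 qm
  have w0 := J_zero_eq hY hY2
  have vm1 : J Y 1 (-1) = -J Y 1 1 / Y := by rw [n1]; rw [zpow_one]; field_simp
  have vm2 : J Y 1 (-2) = -J Y 1 2 / Y ^ 2 := by rw [n1]; simp only [zpow_ofNat]; field_simp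
  have v3 : J Y 1 3 = J Y 1 2 := by
    have := a1 (-2); norm_num at this; rw [this, vm2]; field_simp
  have v4 : J Y 1 4 = J Y 1 1 := by
    have := a1 (-1); norm_num at this; rw [this, vm1]; field_simp
  have wm1 : J Y (-1) (-1) = J Y (-1) 1 / Y := by rw [nm]; rw [zpow_one]; field_simp
  have wm2 : J Y (-1) (-2) = J Y (-1) 2 / Y ^ 2 := by rw [nm]; simp only [zpow_ofNat]; field_simp
  have w3 : J Y (-1) 3 = J Y (-1) 2 := by
    have := am (-2); norm_num at this; rw [this, wm2]; field_simp
  have w4 : J Y (-1) 4 = J Y (-1) 1 := by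
    have := am (-1); norm_num at this; rw [this, wm1]; field_simp
  have vm3 : J Y 1 (-3) = -J Y 1 2 / Y ^ 3 := by rw [n1, v3]; simp only [zpow_ofNat]; field_simp
  have Dm1 : DJ Y 1 (-1) = (DJ Y 1 1 - J Y 1 1) / Y := by rw [dn1]; rw [zpow_one]; field_simp
  have Dm2 : DJ Y 1 (-2) = (DJ Y 1 2 - J Y 1 2) / Y ^ 2 := by rw [dn1]; simp only [zpow_ofNat]; field_simp
  have D3 : DJ Y 1 3 = -DJ Y 1 2 := by
    have := da1 (-2); norm_num at this; rw [this, Dm2, vm2]; field_simp; ring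
  refine
    { hY := hY
      ht := J_ne hY hY1 (by simp) (Or.inl rfl)
      hu := J_ne hY hY1 (by simp) (Or.inr rfl)
      hA := J_ne hY hY1 (by simp) (Or.inr rfl)
      hB := J_ne hY hY1 (by simp) (Or.inl rfl)
      hC := psi_ne (p_ne hY hY2) (by
        rw [norm_pow]
        calc ‖Y‖ ^ 5 ≤ ‖Y‖ ^ 1 := pow_le_pow_of_le_one (norm_nonneg _) hY2.le (by norm_num)
          _ < 1 / 2 := by simpa using hY1)
      hκ := rfl, v1 := rfl, v2 := rfl, w1 := rfl, w2 := rfl, D1 := rfl, D2 := rfl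
      v3 := v3, v4 := v4, vm1 := vm1, vm2 := vm2, w0 := w0, w3 := w3, w4 := w4
      wm1 := wm1, wm2 := wm2, Dm1 := Dm1, Dm2 := Dm2, vm3 := vm3
      v6 := ?_, vm4 := ?_, wm3 := ?_, wm4 := ?_, wm5 := ?_, D0 := ?_
      Dm3 := ?_, D4 := ?_, D6 := ?_ }
  · have := a1 1; norm_num at this; rw [this]; field_simp
  · rw [n1, v4]; simp only [zpow_ofNat]; field_simp
  · rw [nm, w3]; simp only [zpow_ofNat]; field_simp
  · rw [nm, w4]; simp only [zpow_ofNat]; field_simp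
  · have := am (-5); norm_num at this; rw [w0] at this; rw [this]
    have := pow_ne_zero 5 hY
    field_simp
  · have := dnm 0; norm_num at this; rw [w0] at this; linear_combination this / 2
  · rw [dn1, D3, v3]; simp only [zpow_ofNat]; field_simp; ring
  · have := da1 (-1); norm_num at this; rw [this, Dm1, vm1]; field_simp; ring
  · have := da1 1; norm_num at this; rw [this]; field_simp

/-! ### Relations between the theta and Appell–Lerch values -/

set_option linter.unusedSimpArgs false

/-- The relations `R1`, `R2`, `R3` are instances of the three-term relation `threeZ` with `s = -1`. -/
lemma R1 {Y t u A B C κ d1 d2 : ℂ} (h : ThetaVals Y t u A B C κ d1 d2) (hY1 : ‖Y‖ < 1) :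
    κ * (A * B * u ^ 2 - A ^ 2 * t * u - 2 * Y * C * B * t ^ 2) = 0 := by
  obtain ⟨hY, ht, hu, hA, hB, hC, hκ, v1, v2, v3, v4, v6, vm1, vm2, vm3, vm4, w0, w1, w2, w3, w4, wm1,
    wm2, wm3, wm4, wm5, D0, D1, D2, Dm1, Dm2, Dm3, D4, D6⟩ := h
  have g := threeZ hY hY1 (s := -1) (by norm_num) (-3) 1 2 4 (by decide) (by decide) (by decide)
    (by rw [v1]; simp [ht, hu, hY]) (by rw [v2]; simp [ht, hu, hY])
  simp only [Int.reduceAdd, Int.reduceSub, Int.reduceNeg, zpow_neg, zpow_one, zpow_ofNat, zpow_zero,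
    v1, v2, v3, v4, v6, vm1, vm2, vm3, vm4, w0, w1, w2, w3, w4, wm1, wm2, wm3, wm4, wm5, hκ,
    D0, D1, D2, Dm1, Dm2, Dm3, D4, D6] at g
  linear_combination (norm := (field_simp; ring)) (-1) * g

lemma R2 {Y t u A B C κ d1 d2 : ℂ} (h : ThetaVals Y t u A B C κ d1 d2) (hY1 : ‖Y‖ < 1) :
    κ * (A * B * t ^ 2 + B ^ 2 * t * u - 2 * C * A * u ^ 2) = 0 := by
  obtain ⟨hY, ht, hu, hA, hB, hC, hκ, v1, v2, v3, v4, v6, vm1, vm2, vm3, vm4, w0, w1, w2, w3, w4, wm1,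
    wm2, wm3, wm4, wm5, D0, D1, D2, Dm1, Dm2, Dm3, D4, D6⟩ := h
  have g := threeZ hY hY1 (s := -1) (by norm_num) (-2) 1 2 3 (by decide) (by decide) (by decide)
    (by rw [v1]; simp [ht, hu, hY]) (by rw [v2]; simp [ht, hu, hY])
  simp only [Int.reduceAdd, Int.reduceSub, Int.reduceNeg, zpow_neg, zpow_one, zpow_ofNat, zpow_zero,
    v1, v2, v3, v4, v6, vm1, vm2, vm3, vm4, w0, w1, w2, w3, w4, wm1, wm2, wm3, wm4, wm5, hκ,
    D0, D1, D2, Dm1, Dm2, Dm3, D4, D6] at g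
  linear_combination (norm := (field_simp; ring)) (1 / Y) * g

lemma R3 {Y t u A B C κ d1 d2 : ℂ} (h : ThetaVals Y t u A B C κ d1 d2) (hY1 : ‖Y‖ < 1) :
    κ * (B ^ 2 * u ^ 2 - A ^ 2 * t ^ 2 - 4 * Y * C ^ 2 * t * u) = 0 := by
  obtain ⟨hY, ht, hu, hA, hB, hC, hκ, v1, v2, v3, v4, v6, vm1, vm2, vm3, vm4, w0, w1, w2, w3, w4, wm1,
    wm2, wm3, wm4, wm5, D0, D1, D2, Dm1, Dm2, Dm3, D4, D6⟩ := h
  have g := threeZ hY hY1 (s := -1) (by norm_num) (-3) 1 2 3 (by decide) (by decide) (by decide)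
    (by rw [v1]; simp [ht, hu, hY]) (by rw [v2]; simp [ht, hu, hY])
  simp only [Int.reduceAdd, Int.reduceSub, Int.reduceNeg, zpow_neg, zpow_one, zpow_ofNat, zpow_zero,
    v1, v2, v3, v4, v6, vm1, vm2, vm3, vm4, w0, w1, w2, w3, w4, wm1, wm2, wm3, wm4, wm5, hκ,
    D0, D1, D2, Dm1, Dm2, Dm3, D4, D6] at g
  linear_combination (norm := (field_simp; ring)) (-1) * g

/-- The relations `g1`–`g8` are instances of `gaugeZ`. They express the Appell–Lerch sums occurring in the
five components through few basic ones. -/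
lemma g1 {Y t u A B C κ d1 d2 : ℂ} (h : ThetaVals Y t u A B C κ d1 d2) (hY1 : ‖Y‖ < 1) :
    La Y (-1) (-1) 1 = (B * La Y (-1) 0 2 + κ * B / u) / (2 * C) := by
  obtain ⟨hY, ht, hu, hA, hB, hC, hκ, v1, v2, v3, v4, v6, vm1, vm2, vm3, vm4, w0, w1, w2, w3, w4, wm1,
    wm2, wm3, wm4, wm5, D0, D1, D2, Dm1, Dm2, Dm3, D4, D6⟩ := h
  have g := gaugeZ hY hY1 (s := -1) (by norm_num) (-2) (1) (2) (by decide) (by decide)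
    (by rw [v1]; simp [ht, hu, hY])
  simp only [Int.reduceAdd, Int.reduceSub, Int.reduceNeg, zpow_neg, zpow_one, zpow_ofNat, zpow_zero,
    v1, v2, v3, v4, v6, vm1, vm2, vm3, vm4, w0, w1, w2, w3, w4, wm1, wm2, wm3, wm4, wm5, hκ,
    D0, D1, D2, Dm1, Dm2, Dm3, D4, D6] at g
  linear_combination (norm := (field_simp; ring)) (1/(2*C*Y*t*u)) * g

lemma g2 {Y t u A B C κ d1 d2 : ℂ} (h : ThetaVals Y t u A B C κ d1 d2) (hY1 : ‖Y‖ < 1) :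
    La Y (-1) (-4) (-2) = (B * La Y (-1) 0 2 - κ * t * A / u ^ 2) / (2 * C) := by
  obtain ⟨hY, ht, hu, hA, hB, hC, hκ, v1, v2, v3, v4, v6, vm1, vm2, vm3, vm4, w0, w1, w2, w3, w4, wm1,
    wm2, wm3, wm4, wm5, D0, D1, D2, Dm1, Dm2, Dm3, D4, D6⟩ := h
  have g := gaugeZ hY hY1 (s := -1) (by norm_num) (-2) (-2) (2) (by decide) (by decide)
    (by rw [vm2]; simp [ht, hu, hY])
  simp only [Int.reduceAdd, Int.reduceSub, Int.reduceNeg, zpow_neg, zpow_one, zpow_ofNat, zpow_zero,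
    v1, v2, v3, v4, v6, vm1, vm2, vm3, vm4, w0, w1, w2, w3, w4, wm1, wm2, wm3, wm4, wm5, hκ,
    D0, D1, D2, Dm1, Dm2, Dm3, D4, D6] at g
  linear_combination (norm := (field_simp; ring)) (-Y^4/(2*C*u*u)) * g

lemma g3 {Y t u A B C κ d1 d2 : ℂ} (h : ThetaVals Y t u A B C κ d1 d2) (hY1 : ‖Y‖ < 1) :
    La Y 1 (-4) (-2) = La Y 1 (-1) 1 - κ * u / t ^ 2 := by
  obtain ⟨hY, ht, hu, hA, hB, hC, hκ, v1, v2, v3, v4, v6, vm1, vm2, vm3, vm4, w0, w1, w2, w3, w4, wm1,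
    wm2, wm3, wm4, wm5, D0, D1, D2, Dm1, Dm2, Dm3, D4, D6⟩ := h
  have g := gaugeZ hY hY1 (s := 1) (by norm_num) (-2) (1) (-2) (by decide) (by decide)
    (by rw [v1]; simp [ht, hu, hY])
  simp only [Int.reduceAdd, Int.reduceSub, Int.reduceNeg, zpow_neg, zpow_one, zpow_ofNat, zpow_zero,
    v1, v2, v3, v4, v6, vm1, vm2, vm3, vm4, w0, w1, w2, w3, w4, wm1, wm2, wm3, wm4, wm5, hκ,
    D0, D1, D2, Dm1, Dm2, Dm3, D4, D6] at g
  linear_combination (norm := (field_simp; ring)) (-Y^5/(t*u*t)) * g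

lemma g4 {Y t u A B C κ d1 d2 : ℂ} (h : ThetaVals Y t u A B C κ d1 d2) (hY1 : ‖Y‖ < 1) :
    La Y (-1) (-2) (-1) = (A * La Y (-1) 0 1 - κ * u * B / t ^ 2) / (2 * C) := by
  obtain ⟨hY, ht, hu, hA, hB, hC, hκ, v1, v2, v3, v4, v6, vm1, vm2, vm3, vm4, w0, w1, w2, w3, w4, wm1,
    wm2, wm3, wm4, wm5, D0, D1, D2, Dm1, Dm2, Dm3, D4, D6⟩ := h
  have g := gaugeZ hY hY1 (s := -1) (by norm_num) (-1) (-1) (1) (by decide) (by decide)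
    (by rw [vm1]; simp [ht, hu, hY])
  simp only [Int.reduceAdd, Int.reduceSub, Int.reduceNeg, zpow_neg, zpow_one, zpow_ofNat, zpow_zero,
    v1, v2, v3, v4, v6, vm1, vm2, vm3, vm4, w0, w1, w2, w3, w4, wm1, wm2, wm3, wm4, wm5, hκ,
    D0, D1, D2, Dm1, Dm2, Dm3, D4, D6] at g
  linear_combination (norm := (field_simp; ring)) (-Y^2/(2*C*t*t)) * g

lemma g5 {Y t u A B C κ d1 d2 : ℂ} (h : ThetaVals Y t u A B C κ d1 d2) (hY1 : ‖Y‖ < 1) :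
    La Y (-1) (-3) (-2) = (A * La Y (-1) 0 1 - κ * A / t) / (2 * C) := by
  obtain ⟨hY, ht, hu, hA, hB, hC, hκ, v1, v2, v3, v4, v6, vm1, vm2, vm3, vm4, w0, w1, w2, w3, w4, wm1,
    wm2, wm3, wm4, wm5, D0, D1, D2, Dm1, Dm2, Dm3, D4, D6⟩ := h
  have g := gaugeZ hY hY1 (s := -1) (by norm_num) (-1) (-2) (1) (by decide) (by decide)
    (by rw [vm2]; simp [ht, hu, hY])
  simp only [Int.reduceAdd, Int.reduceSub, Int.reduceNeg, zpow_neg, zpow_one, zpow_ofNat, zpow_zero,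
    v1, v2, v3, v4, v6, vm1, vm2, vm3, vm4, w0, w1, w2, w3, w4, wm1, wm2, wm3, wm4, wm5, hκ,
    D0, D1, D2, Dm1, Dm2, Dm3, D4, D6] at g
  linear_combination (norm := (field_simp; ring)) (-Y^4/(2*C*t*u)) * g

lemma g6 {Y t u A B C κ d1 d2 : ℂ} (h : ThetaVals Y t u A B C κ d1 d2) (hY1 : ‖Y‖ < 1) :
    La Y 1 (-3) (-2) = La Y 1 (-2) (-1) + κ * Y * t / u ^ 2 := by
  obtain ⟨hY, ht, hu, hA, hB, hC, hκ, v1, v2, v3, v4, v6, vm1, vm2, vm3, vm4, w0, w1, w2, w3, w4, wm1,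
    wm2, wm3, wm4, wm5, D0, D1, D2, Dm1, Dm2, Dm3, D4, D6⟩ := h
  have g := gaugeZ hY hY1 (s := 1) (by norm_num) (-1) (-1) (-2) (by decide) (by decide)
    (by rw [vm1]; simp [ht, hu, hY])
  simp only [Int.reduceAdd, Int.reduceSub, Int.reduceNeg, zpow_neg, zpow_one, zpow_ofNat, zpow_zero,
    v1, v2, v3, v4, v6, vm1, vm2, vm3, vm4, w0, w1, w2, w3, w4, wm1, wm2, wm3, wm4, wm5, hκ,
    D0, D1, D2, Dm1, Dm2, Dm3, D4, D6] at g
  linear_combination (norm := (field_simp; ring)) (Y^7/(t*u*u)) * g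

lemma g7 {Y t u A B C κ d1 d2 : ℂ} (h : ThetaVals Y t u A B C κ d1 d2) (hY1 : ‖Y‖ < 1) :
    La Y (-1) (-3) (-1) = (A * La Y (-1) 0 2 - κ * B / t) / (2 * C) := by
  obtain ⟨hY, ht, hu, hA, hB, hC, hκ, v1, v2, v3, v4, v6, vm1, vm2, vm3, vm4, w0, w1, w2, w3, w4, wm1,
    wm2, wm3, wm4, wm5, D0, D1, D2, Dm1, Dm2, Dm3, D4, D6⟩ := h
  have g := gaugeZ hY hY1 (s := -1) (by norm_num) (-2) (-1) (2) (by decide) (by decide)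
    (by rw [vm1]; simp [ht, hu, hY])
  simp only [Int.reduceAdd, Int.reduceSub, Int.reduceNeg, zpow_neg, zpow_one, zpow_ofNat, zpow_zero,
    v1, v2, v3, v4, v6, vm1, vm2, vm3, vm4, w0, w1, w2, w3, w4, wm1, wm2, wm3, wm4, wm5, hκ,
    D0, D1, D2, Dm1, Dm2, Dm3, D4, D6] at g
  linear_combination (norm := (field_simp; ring)) (-Y^2/(2*C*t*u)) * g

lemma g8 {Y t u A B C κ d1 d2 : ℂ} (h : ThetaVals Y t u A B C κ d1 d2) (hY1 : ‖Y‖ < 1) :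
    Y * La Y (-1) 1 2 = (B * La Y (-1) 0 1 - κ * A / u) / (2 * C) := by
  obtain ⟨hY, ht, hu, hA, hB, hC, hκ, v1, v2, v3, v4, v6, vm1, vm2, vm3, vm4, w0, w1, w2, w3, w4, wm1,
    wm2, wm3, wm4, wm5, D0, D1, D2, Dm1, Dm2, Dm3, D4, D6⟩ := h
  have g := gaugeZ hY hY1 (s := -1) (by norm_num) (-1) (2) (1) (by decide) (by decide)
    (by rw [v2]; simp [ht, hu, hY])
  simp only [Int.reduceAdd, Int.reduceSub, Int.reduceNeg, zpow_neg, zpow_one, zpow_ofNat, zpow_zero,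
    v1, v2, v3, v4, v6, vm1, vm2, vm3, vm4, w0, w1, w2, w3, w4, wm1, wm2, wm3, wm4, wm5, hκ,
    D0, D1, D2, Dm1, Dm2, Dm3, D4, D6] at g
  linear_combination (norm := (field_simp; ring)) (1/(2*C*t*u*Y)) * g

/-- The relations `h1`–`h4` are instances of `hcircZ`. They remove the sums with `c = 0`, in which a
singular term is omitted. -/
lemma h1 {Y t u A B C κ d1 d2 : ℂ} (h : ThetaVals Y t u A B C κ d1 d2) (hY1 : ‖Y‖ < 1) :
    La Y (-1) (-2) 0 = d2 / u - 1 / 2 + A * La Y (-1) 0 2 / (2 * C) := by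
  obtain ⟨hY, ht, hu, hA, hB, hC, hκ, v1, v2, v3, v4, v6, vm1, vm2, vm3, vm4, w0, w1, w2, w3, w4, wm1,
    wm2, wm3, wm4, wm5, D0, D1, D2, Dm1, Dm2, Dm3, D4, D6⟩ := h
  have g := hcircZ hY hY1 (s := -1) (by norm_num) (-2) (2) (by decide)
  simp only [Int.reduceAdd, Int.reduceSub, Int.reduceNeg, zpow_neg, zpow_one, zpow_ofNat, zpow_zero,
    v1, v2, v3, v4, v6, vm1, vm2, vm3, vm4, w0, w1, w2, w3, w4, wm1, wm2, wm3, wm4, wm5, hκ,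
    D0, D1, D2, Dm1, Dm2, Dm3, D4, D6] at g
  linear_combination (norm := (field_simp; ring)) (1/(2*C*u)) * g

lemma h2 {Y t u A B C κ d1 d2 : ℂ} (h : ThetaVals Y t u A B C κ d1 d2) (hY1 : ‖Y‖ < 1) :
    La Y 1 (-2) 0 = -(d2 / u) - d1 / t + La Y 1 (-3) (-1) := by
  obtain ⟨hY, ht, hu, hA, hB, hC, hκ, v1, v2, v3, v4, v6, vm1, vm2, vm3, vm4, w0, w1, w2, w3, w4, wm1,
    wm2, wm3, wm4, wm5, D0, D1, D2, Dm1, Dm2, Dm3, D4, D6⟩ := h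
  have g := hcircZ hY hY1 (s := 1) (by norm_num) (-2) (-1) (by decide)
  simp only [Int.reduceAdd, Int.reduceSub, Int.reduceNeg, zpow_neg, zpow_one, zpow_ofNat, zpow_zero,
    v1, v2, v3, v4, v6, vm1, vm2, vm3, vm4, w0, w1, w2, w3, w4, wm1, wm2, wm3, wm4, wm5, hκ,
    D0, D1, D2, Dm1, Dm2, Dm3, D4, D6] at g
  linear_combination (norm := (field_simp; ring)) (Y^4/(t*u)) * g

lemma h3 {Y t u A B C κ d1 d2 : ℂ} (h : ThetaVals Y t u A B C κ d1 d2) (hY1 : ‖Y‖ < 1) :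
    La Y (-1) (-1) 0 = d1 / t - 1 / 2 + B * La Y (-1) 0 1 / (2 * C) := by
  obtain ⟨hY, ht, hu, hA, hB, hC, hκ, v1, v2, v3, v4, v6, vm1, vm2, vm3, vm4, w0, w1, w2, w3, w4, wm1,
    wm2, wm3, wm4, wm5, D0, D1, D2, Dm1, Dm2, Dm3, D4, D6⟩ := h
  have g := hcircZ hY hY1 (s := -1) (by norm_num) (-1) (1) (by decide)
  simp only [Int.reduceAdd, Int.reduceSub, Int.reduceNeg, zpow_neg, zpow_one, zpow_ofNat, zpow_zero,
    v1, v2, v3, v4, v6, vm1, vm2, vm3, vm4, w0, w1, w2, w3, w4, wm1, wm2, wm3, wm4, wm5, hκ,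
    D0, D1, D2, Dm1, Dm2, Dm3, D4, D6] at g
  linear_combination (norm := (field_simp; ring)) (1/(2*C*t)) * g

lemma h4 {Y t u A B C κ d1 d2 : ℂ} (h : ThetaVals Y t u A B C κ d1 d2) (hY1 : ‖Y‖ < 1) :
    La Y 1 (-1) 0 = d2 / u - d1 / t - Y * La Y 1 1 2 := by
  obtain ⟨hY, ht, hu, hA, hB, hC, hκ, v1, v2, v3, v4, v6, vm1, vm2, vm3, vm4, w0, w1, w2, w3, w4, wm1,
    wm2, wm3, wm4, wm5, D0, D1, D2, Dm1, Dm2, Dm3, D4, D6⟩ := h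
  have g := hcircZ hY hY1 (s := 1) (by norm_num) (-1) (2) (by decide)
  simp only [Int.reduceAdd, Int.reduceSub, Int.reduceNeg, zpow_neg, zpow_one, zpow_ofNat, zpow_zero,
    v1, v2, v3, v4, v6, vm1, vm2, vm3, vm4, w0, w1, w2, w3, w4, wm1, wm2, wm3, wm4, wm5, hκ,
    D0, D1, D2, Dm1, Dm2, Dm3, D4, D6] at g
  linear_combination (norm := (field_simp; ring)) (1/(t*u)) * g

/-- The relations `X1`, `X2` are instances of `fourZ`, and determine the logarithmic derivatives `d1 / t`
and `d2 / u`. -/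
lemma X1 {Y t u A B C κ d1 d2 : ℂ} (h : ThetaVals Y t u A B C κ d1 d2) (hY1 : ‖Y‖ < 1) :
    3 * (d1 / t) + d2 / u - 1 = -(κ * u ^ 2 / t ^ 3) := by
  obtain ⟨hY, ht, hu, hA, hB, hC, hκ, v1, v2, v3, v4, v6, vm1, vm2, vm3, vm4, w0, w1, w2, w3, w4, wm1,
    wm2, wm3, wm4, wm5, D0, D1, D2, Dm1, Dm2, Dm3, D4, D6⟩ := h
  have g := fourZ hY hY1 (-2) (1) (4) (by decide) (by decide)
    (by norm_num [v1, ht, hu, hY]) (by norm_num [v4, ht, hu, hY])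
    (by norm_num [vm1, ht, hu, hY]) (by norm_num [v2, ht, hu, hY])
  simp only [Int.reduceAdd, Int.reduceSub, Int.reduceNeg, zpow_neg, zpow_one, zpow_ofNat, zpow_zero,
    v1, v2, v3, v4, v6, vm1, vm2, vm3, vm4, w0, w1, w2, w3, w4, wm1, wm2, wm3, wm4, wm5, hκ,
    D0, D1, D2, Dm1, Dm2, Dm3, D4, D6] at g
  linear_combination (norm := (field_simp; ring)) g

lemma X2 {Y t u A B C κ d1 d2 : ℂ} (h : ThetaVals Y t u A B C κ d1 d2) (hY1 : ‖Y‖ < 1) :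
    3 * (d2 / u) - d1 / t = κ * Y * t ^ 2 / u ^ 3 := by
  obtain ⟨hY, ht, hu, hA, hB, hC, hκ, v1, v2, v3, v4, v6, vm1, vm2, vm3, vm4, w0, w1, w2, w3, w4, wm1,
    wm2, wm3, wm4, wm5, D0, D1, D2, Dm1, Dm2, Dm3, D4, D6⟩ := h
  have g := fourZ hY hY1 (-4) (2) (6) (by decide) (by decide)
    (by norm_num [v2, ht, hu, hY]) (by norm_num [v6, ht, hu, hY])
    (by norm_num [vm2, ht, hu, hY]) (by norm_num [v2, ht, hu, hY])
  simp only [Int.reduceAdd, Int.reduceSub, Int.reduceNeg, zpow_neg, zpow_one, zpow_ofNat, zpow_zero,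
    v1, v2, v3, v4, v6, vm1, vm2, vm3, vm4, w0, w1, w2, w3, w4, wm1, wm2, wm3, wm4, wm5, hκ,
    D0, D1, D2, Dm1, Dm2, Dm3, D4, D6] at g
  linear_combination (norm := (field_simp; ring)) g

/-- The relations `l1`, `l2` are instances of `jt_mul_lam_one`. -/
lemma l1 {Y t u A B C κ d1 d2 : ℂ} (h : ThetaVals Y t u A B C κ d1 d2) (hY1 : ‖Y‖ < 1) :
    La Y 1 0 1 = κ / t := by
  obtain ⟨hY, ht, hu, hA, hB, hC, hκ, v1, v2, v3, v4, v6, vm1, vm2, vm3, vm4, w0, w1, w2, w3, w4, wm1,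
    wm2, wm3, wm4, wm5, D0, D1, D2, Dm1, Dm2, Dm3, D4, D6⟩ := h
  have := jt_mul_lam_one (p_ne hY hY1) (p_lt hY hY1) (b := Y ^ (1 : ℤ)) (zpow_ne_zero _ hY)
    (den_ne hY hY1 (by decide)) (by simpa [J] using (by rwa [v1] : J Y 1 1 ≠ 0))
  rw [eq_div_iff ht, ← v1, ← hκ]
  simp only [La, J, kap, one_mul, zpow_zero] at *
  linear_combination this

lemma l2 {Y t u A B C κ d1 d2 : ℂ} (h : ThetaVals Y t u A B C κ d1 d2) (hY1 : ‖Y‖ < 1) :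
    La Y 1 0 2 = κ / u := by
  obtain ⟨hY, ht, hu, hA, hB, hC, hκ, v1, v2, v3, v4, v6, vm1, vm2, vm3, vm4, w0, w1, w2, w3, w4, wm1,
    wm2, wm3, wm4, wm5, D0, D1, D2, Dm1, Dm2, Dm3, D4, D6⟩ := h
  have := jt_mul_lam_one (p_ne hY hY1) (p_lt hY hY1) (b := Y ^ (2 : ℤ)) (zpow_ne_zero _ hY)
    (den_ne hY hY1 (by decide)) (by simpa [J] using (by rwa [v2] : J Y 1 2 ≠ 0))
  rw [eq_div_iff hu, ← v2, ← hκ]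
  simp only [La, J, kap, one_mul, zpow_zero] at *
  linear_combination this

/-! ### Elimination: the five components -/

/-- The left-hand sides are the coefficients of `1, Q, Q², Q³, Q⁴` in `Gs Q`, for `Q ^ 5 = Y`; the
right-hand sides are those of the product of `A + Q B + Q³ C` with `E0 + Q E1 + Q² E2 + Q⁴ E4`, which
lacks a term in `Q³`. So five linear equations are solved in four unknowns, and the relations above
express that they are compatible. -/
lemma five {Y t u A B C κ d1 d2 : ℂ} (h : ThetaVals Y t u A B C κ d1 d2) (hY1 : ‖Y‖ < 1) :
    ∃ E0 E1 E2 E4 : ℂ,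
      (1 + La Y (-1) (-2) 0 + La Y 1 (-2) 0 + (La Y (-1) (-1) 0 + La Y 1 (-1) 0) / 2
        + La Y (-1) (-3) (-1) - La Y 1 (-3) (-1) + Y / 2 * (La Y (-1) 1 2 + La Y 1 1 2)
          = A * E0 + C * Y * E2 + B * Y * E4) ∧
      (La Y (-1) (-1) 1 - La Y 1 (-1) 1 + La Y (-1) (-4) (-2) + La Y 1 (-4) (-2)
          = A * E1 + B * E0) ∧
      ((La Y (-1) 0 1 - La Y 1 0 1) / 2 = A * E2 + B * E1 + C * Y * E4) ∧
      (La Y (-1) 0 2 + La Y 1 0 2 = B * E2 + C * E0) ∧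
      ((La Y (-1) (-2) (-1) - La Y 1 (-2) (-1) + La Y (-1) (-3) (-2) + La Y 1 (-3) (-2)) / (2 * Y)
          = A * E4 + C * E1) := by
  have r1 := R1 h hY1
  have r2 := R2 h hY1
  have r3 := R3 h hY1
  have x1 := X1 h hY1
  have x2 := X2 h hY1
  have e8 := g8 h hY1
  have hY := h.hY
  have ht := h.ht
  have hu := h.hu
  have hB := h.hB
  have hC := h.hC
  refine ⟨(La Y (-1) 0 2 + κ / u - κ * C * u / (B * t ^ 2)) / C, -κ / (B * t),
    κ * C * u / (B ^ 2 * t ^ 2),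
    (La Y (-1) 0 1 / 2 + κ / (2 * t) - κ * A * C * u / (B ^ 2 * t ^ 2)) / (C * Y), ?_, ?_, ?_, ?_, ?_⟩
  · rw [h1 h hY1, h2 h hY1, h3 h hY1, h4 h hY1, g7 h hY1]
    linear_combination (norm := (field_simp; ring)) e8 / 2 + (x2 - x1) / 4
      + (-(B * t ^ 3 / 2) * r1 + C * u ^ 3 * r3 - (4 * B * u ^ 2 * t + A * u * t ^ 2 / 2) * r2)
        / (4 * C * u ^ 3 * t ^ 3 * B ^ 2)
  · rw [g1 h hY1, g2 h hY1, g3 h hY1]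
    linear_combination (norm := (field_simp; ring)) -r2 / (2 * C * u ^ 2 * B * t)
  · rw [l1 h hY1]
    field_simp; ring
  · rw [l2 h hY1]
    field_simp; ring
  · rw [g4 h hY1, g5 h hY1, g6 h hY1]
    linear_combination (norm := (field_simp; ring))
      -(t * B * r1 + 2 * A * u * r2 + B * u * r3) / (2 * C * t ^ 2 * u ^ 2 * B ^ 2 * (2 * Y))

/-! ### Five-dissection of the quotient -/

/-- Splitting a bilateral series according to the residue of the index modulo `5`. -/
lemma tsum_mod5 {f : ℤ → ℂ} (hf : Summable f) :
    ∑' n, f n = (∑' m, f (5 * m + -2)) + (∑' m, f (5 * m + -1)) + (∑' m, f (5 * m + 0))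
      + (∑' m, f (5 * m + 1)) + ∑' m, f (5 * m + 2) := by
  let e : Fin 5 × ℤ ≃ ℤ :=
    { toFun := fun z => 5 * z.2 + ((z.1 : ℕ) : ℤ) - 2
      invFun := fun n => (⟨((n + 2) % 5).toNat, by omega⟩, (n + 2) / 5)
      left_inv := fun z => by
        obtain ⟨⟨a, ha⟩, m⟩ := z
        simp only [Prod.mk.injEq, Fin.mk.injEq]
        omega
      right_inv := fun n => by simp only; omega }
  have h1 : Summable (fun z : Fin 5 × ℤ => f (e z)) := e.summable_iff.2 hf
  rw [← e.tsum_eq, h1.tsum_prod, tsum_fintype, Fin.sum_univ_five]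
  simp only [e, Equiv.coe_fn_mk]
  have a0 : ∀ m : ℤ, 5 * m + (((0 : Fin 5) : ℕ) : ℤ) - 2 = 5 * m + -2 := fun m => by simp; ring
  have a1 : ∀ m : ℤ, 5 * m + (((1 : Fin 5) : ℕ) : ℤ) - 2 = 5 * m + -1 := fun m => by simp; ring
  have a2 : ∀ m : ℤ, 5 * m + (((2 : Fin 5) : ℕ) : ℤ) - 2 = 5 * m + 0 := fun m => by simp
  have a3 : ∀ m : ℤ, 5 * m + (((3 : Fin 5) : ℕ) : ℤ) - 2 = 5 * m + 1 := fun m => by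
    have : (((3 : Fin 5) : ℕ) : ℤ) = 3 := rfl
    rw [this]; ring
  have a4 : ∀ m : ℤ, 5 * m + (((4 : Fin 5) : ℕ) : ℤ) - 2 = 5 * m + 2 := fun m => by
    have : (((4 : Fin 5) : ℕ) : ℤ) = 4 := rfl
    rw [this]; ring
  simp only [a0, a1, a2, a3, a4]

lemma tri_mod5 (m c : ℤ) : tri (5 * m + c) = 25 * tri m + 5 * ((2 + c) * m) + tri c := by
  have h1 := two_mul_tri (5 * m + c)
  have h2 := two_mul_tri m
  have h3 := two_mul_tri c
  have : 2 * tri (5 * m + c) = 2 * (25 * tri m + 5 * ((2 + c) * m) + tri c) := by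
    linear_combination h1 - 25 * h2 - h3
  omega

/-- The part of `2 ψ(Q)` with summation index `≡ c (mod 5)`. -/
lemma psi_part {Q : ℂ} (hQ : Q ≠ 0) (hQ1 : ‖Q‖ < 1 / 2)
    (c : ℤ) : ∑' m : ℤ, Q ^ tri (5 * m + c) = Q ^ tri c * J (Q ^ 5) (-1) (2 + c) := by
  unfold J jt
  rw [← tsum_mul_left]
  refine tsum_congr fun m => ?_
  have e : Q ^ tri (5 * m + c) = Q ^ tri c * (((Q ^ 5) ^ 5) ^ tri m * ((Q ^ 5) ^ (2 + c)) ^ m) := by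
    rw [tri_mod5, zpow_add₀ hQ, zpow_add₀ hQ, zpow_mul Q 25, zpow_mul Q 5, zpow_mul (Q ^ 5)]
    norm_cast
    ring
  rw [e, uc, mul_zpow (-1)]
  have : ((-1 : ℂ)) ^ m * (-1) ^ m = 1 := by rw [← mul_zpow]; simp
  linear_combination (-(Q ^ tri c * (((Q ^ 5) ^ 5) ^ tri m * ((Q ^ 5) ^ (2 + c)) ^ m))) * this

/-- The five-dissection of `ψ`. -/
lemma psi_dissect {Q : ℂ} (hQ : Q ≠ 0) (hQ1 : ‖Q‖ < 1 / 2) :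
    psi Q = J (Q ^ 5) (-1) 2 + Q * J (Q ^ 5) (-1) 1 + Q ^ 3 * psi ((Q ^ 5) ^ 5) := by
  have hQ2 : ‖Q‖ < 1 := by linarith
  have hY : Q ^ 5 ≠ 0 := p_ne hQ hQ2
  have hY1 : ‖Q ^ 5‖ < 1 / 2 := by
    rw [norm_pow]
    calc ‖Q‖ ^ 5 ≤ ‖Q‖ ^ 1 := pow_le_pow_of_le_one (norm_nonneg _) hQ2.le (by norm_num)
      _ < 1 / 2 := by simpa using hQ1
  have h := thetaVals hY hY1
  have e := tsum_tri hQ hQ2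
  rw [tsum_mod5 (sum_tri hQ hQ2), psi_part hQ hQ1, psi_part hQ hQ1, psi_part hQ hQ1,
    psi_part hQ hQ1, psi_part hQ hQ1] at e
  have t1 : tri (-2) = 3 := rfl
  have t2 : tri (-1) = 1 := rfl
  have t3 : tri 0 = 0 := rfl
  have t4 : tri 1 = 0 := rfl
  have t5 : tri 2 = 1 := rfl
  simp only [t1, t2, t3, t4, t5, Int.reduceAdd, Int.reduceNeg, zpow_ofNat, zpow_one, zpow_zero, h.w0,
    h.w3, h.w4] at e
  linear_combination -e / 2

/-- Bilateral Appell-type sums `∑ σⁿ Q^{n(n-1)/2 + kn} / (1 - Q^{5n})` (the term `n = 0` is zero,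
by division by zero). -/
noncomputable def Hs (Q σ : ℂ) (k : ℤ) : ℂ := ∑' n : ℤ, Q ^ tri n * (σ * Q ^ k) ^ n / (1 - Q ^ (5 * n))

lemma inv_bound {Q : ℂ} (hQ : Q ≠ 0) (hQ1 : ‖Q‖ < 1 / 2) (n : ℤ) : ‖(1 - Q ^ (5 * n))⁻¹‖ ≤ 2 := by
  have hQ0 : 0 < ‖Q‖ := norm_pos_iff.2 hQ
  rw [norm_inv]
  rcases lt_trichotomy n 0 with hn | hn | hn
  · have h1 : 2 ≤ ‖Q ^ (5 * n)‖ := by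
      rw [norm_zpow]
      calc (2 : ℝ) ≤ ‖Q‖⁻¹ := by rw [le_inv_comm₀ two_pos hQ0]; linarith
        _ = ‖Q‖ ^ (-1 : ℤ) := by rw [zpow_neg_one]
        _ ≤ ‖Q‖ ^ (5 * n) := zpow_le_zpow_right_of_le_one₀ hQ0 (by linarith) (by omega)
    have h2 := norm_sub_norm_le (Q ^ (5 * n)) 1
    rw [norm_sub_rev, norm_one] at h2
    have : (1 : ℝ) ≤ ‖1 - Q ^ (5 * n)‖ := by linarith
    exact (inv_le_one_of_one_le₀ this).trans one_le_two
  · simp [hn]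
  · have h1 : ‖Q ^ (5 * n)‖ ≤ 1 / 2 := by
      have := zpow_norm_le hQ hQ1 (e := 5 * n) (k := 1) (by push_cast; omega)
      rw [pow_one] at this
      linarith
    have h2 := norm_sub_norm_le 1 (Q ^ (5 * n))
    rw [norm_one] at h2
    rw [inv_le_comm₀ (by linarith) two_pos]
    linarith

lemma sum_Hs {Q : ℂ} (hQ : Q ≠ 0) (hQ1 : ‖Q‖ < 1 / 2) {σ : ℂ} (hσ : σ * σ = 1) (k : ℤ) :
    Summable fun n : ℤ => Q ^ tri n * (σ * Q ^ k) ^ n / (1 - Q ^ (5 * n)) := by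
  have hs0 : σ ≠ 0 := fun h => by simp [h] at hσ
  have h := (summable_uc hQ (by linarith : ‖Q‖ < 1) (x := σ * Q ^ k)
    (mul_ne_zero hs0 (zpow_ne_zero _ hQ))).mul_right 2
  refine Summable.of_norm_bounded h fun n => ?_
  rw [div_eq_mul_inv, norm_mul]
  have e : ‖Q ^ tri n * (σ * Q ^ k) ^ n‖ = ‖uc Q n * (σ * Q ^ k) ^ n‖ := by
    simp [uc]
  rw [e]
  exact mul_le_mul_of_nonneg_left (inv_bound hQ hQ1 n) (norm_nonneg _)

lemma Hs_part {Q : ℂ} (hQ : Q ≠ 0) (hQ1 : ‖Q‖ < 1 / 2) {σ : ℂ} (hσ : σ * σ = 1) (k c : ℤ) :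
    ∑' m : ℤ, Q ^ tri (5 * m + c) * (σ * Q ^ k) ^ (5 * m + c) / (1 - Q ^ (5 * (5 * m + c)))
      = Q ^ (tri c + k * c) * σ ^ c * La (Q ^ 5) (-σ) (k + c - 3) c := by
  have hs0 : σ ≠ 0 := fun h => by simp [h] at hσ
  unfold La lam
  rw [← tsum_mul_left]
  refine tsum_congr fun m => ?_
  have hm : Q ^ m ≠ 0 := zpow_ne_zero _ hQ
  have e1 : Q ^ (5 * (5 * m + c)) = (Q ^ 5) ^ c * ((Q ^ 5) ^ 5) ^ m := by
    rw [← zpow_natCast, ← zpow_natCast, ← zpow_mul, ← zpow_mul, ← zpow_mul, ← zpow_add₀ hQ]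
    congr 1; push_cast; ring
  have e2 : σ ^ (5 * m + c) = σ ^ m * σ ^ c := by
    have : (5 * m + c) = (m + m) * 2 + m + c := by ring
    rw [this, zpow_add₀ hs0, zpow_add₀ hs0, zpow_mul, zpow_add₀ hs0, ← mul_zpow, hσ]
    simp
  have e3 : Q ^ tri (5 * m + c) * (Q ^ k) ^ (5 * m + c) = Q ^ (tri c + k * c) *
      (((Q ^ 5) ^ 5) ^ tri m * ((Q ^ 5) ^ 5) ^ m * ((Q ^ 5) ^ (k + c - 3)) ^ m) := by
    rw [tri_mod5]
    simp only [← zpow_natCast, ← zpow_mul, ← zpow_add₀ hQ]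
    congr 1; push_cast; ring
  have e4 : ((-1 : ℂ)) ^ m * (-σ) ^ m = σ ^ m := by rw [← mul_zpow]; simp
  rw [e1, mul_zpow, e2, mul_zpow (-σ), uc]
  rw [show Q ^ tri (5 * m + c) * (σ ^ m * σ ^ c * (Q ^ k) ^ (5 * m + c)) =
    σ ^ m * σ ^ c * (Q ^ tri (5 * m + c) * (Q ^ k) ^ (5 * m + c)) by ring, e3, ← e4]
  ring

/-- The five-dissection of the Appell-type sums. -/
lemma Hs_dissect {Q : ℂ} (hQ : Q ≠ 0) (hQ1 : ‖Q‖ < 1 / 2)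
    {σ : ℂ} (hσ : σ * σ = 1) (k : ℤ) : Hs Q σ k =
    Q ^ (3 + k * -2) * σ ^ (-2 : ℤ) * La (Q ^ 5) (-σ) (k + -2 - 3) (-2)
    + Q ^ (1 + k * -1) * σ ^ (-1 : ℤ) * La (Q ^ 5) (-σ) (k + -1 - 3) (-1)
    + Q ^ (0 + k * 0) * σ ^ (0 : ℤ) * La (Q ^ 5) (-σ) (k + 0 - 3) 0
    + Q ^ (0 + k * 1) * σ ^ (1 : ℤ) * La (Q ^ 5) (-σ) (k + 1 - 3) 1
    + Q ^ (1 + k * 2) * σ ^ (2 : ℤ) * La (Q ^ 5) (-σ) (k + 2 - 3) 2 := by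
  rw [Hs, tsum_mod5 (sum_Hs hQ hQ1 hσ k), Hs_part hQ hQ1 hσ, Hs_part hQ hQ1 hσ, Hs_part hQ hQ1 hσ,
    Hs_part hQ hQ1 hσ, Hs_part hQ hQ1 hσ]
  rfl

/-- The series that turns out to be `ψ(Q)` times the generating function of `N₂(0,5,n) - N₂(2,5,n)` at
`-Q`. The term `i = 0` of the sum is zero, by division by zero. -/
noncomputable def Gs (Q : ℂ) : ℂ :=
  1 + ∑' i : ℤ, Q ^ (i * (2 * i - 1)) * (2 * Q ^ (2 * i) + Q ^ (4 * i)) / (1 - Q ^ (10 * i))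

lemma Hs_even {Q : ℂ} (hQ : Q ≠ 0) (hQ1 : ‖Q‖ < 1 / 2) (k : ℤ) : Hs Q 1 k + Hs Q (-1) k =
    2 * ∑' i : ℤ, Q ^ (i * (2 * i - 1)) * Q ^ (2 * k * i) / (1 - Q ^ (10 * i)) := by
  have s1 := sum_Hs hQ hQ1 (σ := 1) (by norm_num) k
  have s2 := sum_Hs hQ hQ1 (σ := -1) (by norm_num) k
  rw [Hs, Hs, ← s1.tsum_add s2, tsum_even_odd (s1.add s2)]
  have z : ∀ i : ℤ, Q ^ tri (1 - 2 * i) * (1 * Q ^ k) ^ (1 - 2 * i) / (1 - Q ^ (5 * (1 - 2 * i))) +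
      Q ^ tri (1 - 2 * i) * (-1 * Q ^ k) ^ (1 - 2 * i) / (1 - Q ^ (5 * (1 - 2 * i))) = 0 := by
    intro i
    have : ((-1 : ℂ)) ^ (1 - 2 * i) = -1 := by
      rw [zpow_sub₀ (by norm_num), zpow_mul]; simp
    rw [mul_zpow (-1), this]; simp only [one_mul]; ring
  simp only [z, tsum_zero, add_zero]
  rw [← tsum_mul_left]
  refine tsum_congr fun i => ?_
  have e1 : tri (2 * i) = i * (2 * i - 1) := by have := two_mul_tri (2 * i); nlinarith
  have e2 : ((-1 : ℂ)) ^ (2 * i) = 1 := by rw [zpow_mul]; simp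
  have e3 : (Q ^ k) ^ (2 * i) = Q ^ (2 * k * i) := by rw [← zpow_mul]; congr 1; ring
  have e4 : 5 * (2 * i) = 10 * i := by ring
  rw [mul_zpow (-1), e1, e2, one_mul, one_mul, e3, e4]; ring

lemma sum_Gs {Q : ℂ} (hQ : Q ≠ 0) (hQ1 : ‖Q‖ < 1 / 2) (k : ℤ) : Summable fun i : ℤ =>
    Q ^ (i * (2 * i - 1)) * Q ^ (2 * k * i) / (1 - Q ^ (10 * i)) := by
  have := (sum_Hs hQ hQ1 (σ := 1) (by norm_num) k).comp_injective
    (i := fun i : ℤ => 2 * i) (fun a b h => by simpa using h)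
  refine this.congr fun i => ?_
  have e1 : tri (2 * i) = i * (2 * i - 1) := by have := two_mul_tri (2 * i); nlinarith
  have e3 : (Q ^ k) ^ (2 * i) = Q ^ (2 * k * i) := by rw [← zpow_mul]; congr 1; ring
  have e4 : 5 * (2 * i) = 10 * i := by ring
  simp only [Function.comp, e1, e4, one_mul, e3]

lemma Gs_eq {Q : ℂ} (hQ : Q ≠ 0) (hQ1 : ‖Q‖ < 1 / 2) :
    Gs Q = 1 + (Hs Q 1 1 + Hs Q (-1) 1) + (Hs Q 1 2 + Hs Q (-1) 2) / 2 := by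
  rw [Hs_even hQ hQ1, Hs_even hQ hQ1, Gs, add_assoc, mul_div_assoc, mul_comm 2 (_ / 2),
    div_mul_cancel₀ _ two_ne_zero,
    ← tsum_mul_left, ← ((sum_Gs hQ hQ1 1).mul_left 2).tsum_add (sum_Gs hQ hQ1 2)]
  congr 1
  refine tsum_congr fun i => ?_
  norm_num
  ring

/-- The quotient `Gs / ψ` has no component of exponent `≡ 3 (mod 5)`. The coefficients `E0`, `E1`,
`E2`, `E4` serve all fifth roots `Q` of `Y` simultaneously. -/
theorem quotient_dissect {Y : ℂ} (hY : Y ≠ 0) (hY1 : ‖Y‖ < 1 / 2) :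
    ∃ E0 E1 E2 E4 : ℂ, ∀ Q : ℂ, Q ^ 5 = Y → ‖Q‖ < 1 / 2 →
      Gs Q = psi Q * (E0 + Q * E1 + Q ^ 2 * E2 + Q ^ 4 * E4) := by
  obtain ⟨E0, E1, E2, E4, f0, f1, f2, f3, f4⟩ := five (thetaVals hY hY1) (by linarith)
  refine ⟨E0, E1, E2, E4, fun Q hQY hQ1 => ?_⟩
  have hQ : Q ≠ 0 := by rintro rfl; simp at hQY; exact hY hQY.symm
  have q1 : (1 : ℂ) * 1 = 1 := by norm_num
  have qm : (-1 : ℂ) * (-1) = 1 := by norm_num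
  rw [Gs_eq hQ hQ1, Hs_dissect hQ hQ1 q1, Hs_dissect hQ hQ1 q1, Hs_dissect hQ hQ1 qm,
    Hs_dissect hQ hQ1 qm, psi_dissect hQ hQ1, hQY]
  have i1 : ((-1 : ℂ)) ^ (-2 : ℤ) = 1 := by norm_num [zpow_neg]
  have i2 : ((-1 : ℂ)) ^ (-1 : ℤ) = -1 := by norm_num [zpow_neg]
  have i3 : Q ^ (-1 : ℤ) = Q ^ 4 / Y := by rw [← hQY, zpow_neg_one]; field_simp
  have i5 : Q ^ (5 : ℤ) = Y := by rw [← hQY]; norm_cast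
  simp only [Int.reduceMul, Int.reduceAdd, Int.reduceSub, Int.reduceNeg, i1, i2, i3, i5, one_zpow, zpow_zero,
    zpow_one, zpow_ofNat, neg_neg, one_mul, mul_one]
  subst hQY
  linear_combination (norm := skip) f0 + Q * f1 + Q ^ 2 * f2 + Q ^ 3 * f3 + Q ^ 4 * f4
  field_simp
  ring

/-! ### The bijection on partitions without repeated odd parts -/

/-- The M₂-rank of a finite multiset of natural numbers. -/
def rk (s : Multiset ℕ) : ℤ := (((s.sup + 1) / 2 : ℕ) : ℤ) - (Multiset.card s : ℤ)

/-- Odd members are not repeated. -/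
def NoRep (s : Multiset ℕ) : Prop := ∀ i, Odd i → s.count i ≤ 1

/-- Partitions without repeated odd parts, as multisets of positive integers. -/
def Pset : Set (Multiset ℕ) := {s | 0 ∉ s ∧ NoRep s}

/-- Partitions of rank at least `r`. For `r ≥ 0` the empty partition, of rank `0`, is excluded because it
has no largest part to be removed. -/
def Aset (r : ℤ) : Set (Multiset ℕ) := {s | s ∈ Pset ∧ r ≤ rk s ∧ (0 ≤ r → s ≠ 0)}

/-- Partitions of rank at most `r + 1`. -/
def Bset (r : ℤ) : Set (Multiset ℕ) := {s | s ∈ Pset ∧ rk s ≤ r + 1}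

/-- The intermediate set between `Aset r` and `Bset r`: pairs of a top part `l` and a multiset of further
parts, padded with zeros so that its cardinality is `⌈l / 2⌉ - r - 1`. -/
def Iset (r : ℤ) : Set (ℕ × Multiset ℕ) :=
  {x | (((x.1 + 1) / 2 : ℕ) : ℤ) = Multiset.card x.2 + r + 1 ∧ (∀ y ∈ x.2, y ≤ x.1) ∧
    NoRep (x.1 ::ₘ x.2)}

/-- The partition formed by the top part and the further parts, with the padding dropped. -/
def fA (x : ℕ × Multiset ℕ) : Multiset ℕ := (x.1 ::ₘ x.2).filter (· ≠ 0)

/-- The inverse of `fA`: the largest part is split off, and zeros are added up to the cardinality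
prescribed by `Iset r`. -/
def gA (r : ℤ) (s : Multiset ℕ) : ℕ × Multiset ℕ :=
  (s.sup, s.erase s.sup + Multiset.replicate
    ((((s.sup + 1) / 2 : ℕ) : ℤ) - r - 1 - Multiset.card (s.erase s.sup)).toNat 0)

/-- The top part is dropped, every further part is raised by `2`, and the parity of the top part is
recorded by the presence of a part `1`. -/
def fB (x : ℕ × Multiset ℕ) : Multiset ℕ :=
  x.2.map (· + 2) + if Even x.1 then {1} else 0

/-- The inverse of `fB`: the presence of a part `1` and the number of other parts determine the top part. -/
def gB (r : ℤ) (s : Multiset ℕ) : ℕ × Multiset ℕ :=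
  ((2 * (Multiset.card (s.erase 1) + r + 1) - if 1 ∈ s then 0 else 1).toNat,
    (s.erase 1).map (· - 2))

lemma NoRep.mono {s t : Multiset ℕ} (h : s ≤ t) (ht : NoRep t) : NoRep s :=
  fun i hi => (Multiset.count_le_of_le i h).trans (ht i hi)

lemma sup_mem {s : Multiset ℕ} (h : s ≠ 0) : s.sup ∈ s := by
  induction s using Multiset.induction with
  | empty => exact absurd rfl h
  | cons a s ih =>
    rw [Multiset.sup_cons]
    by_cases hs : s = 0
    · subst hs; simp
    · rcases le_total a s.sup with h' | h'
      · rw [sup_eq_right.2 h']; exact Multiset.mem_cons_of_mem (ih hs)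
      · rw [sup_eq_left.2 h']; exact Multiset.mem_cons_self _ _

lemma filter_add_zeros (s : Multiset ℕ) :
    s.filter (· ≠ 0) + Multiset.replicate (s.count 0) 0 = s := by
  conv_rhs => rw [← Multiset.filter_add_not (· ≠ 0) s]
  congr 1
  rw [← Multiset.filter_eq']
  exact Multiset.filter_congr (by simp)

lemma card_filter_ne (s : Multiset ℕ) :
    Multiset.card (s.filter (· ≠ 0)) + s.count 0 = Multiset.card s := by
  conv_rhs => rw [← filter_add_zeros s]
  simp

lemma sup_fA {r : ℤ} {x} (hx : x ∈ Iset r) : (fA x).sup = x.1 := by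
  obtain ⟨l, ν⟩ := x
  obtain ⟨-, h2, -⟩ := hx
  simp only [fA] at *
  apply le_antisymm
  · refine Multiset.sup_le.2 fun b hb => ?_
    simp at hb
    rcases hb.1 with rfl | hb
    · rfl
    · exact h2 b hb
  · rcases Nat.eq_zero_or_pos l with rfl | h
    · exact Nat.zero_le _
    · apply Multiset.le_sup
      simp; omega

lemma erase_fA {r : ℤ} {x} (hx : x ∈ Iset r) : (fA x).erase x.1 = x.2.filter (· ≠ 0) := by
  obtain ⟨l, ν⟩ := x
  obtain ⟨-, h2, -⟩ := hx
  simp only [fA] at *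
  rcases Nat.eq_zero_or_pos l with rfl | h
  · have : ν.filter (· ≠ 0) = 0 := by
      rw [Multiset.filter_eq_nil]; intro a ha; simpa using h2 a ha
    rw [Multiset.filter_cons_of_neg _ (by simp), this]; rfl
  · rw [Multiset.filter_cons_of_pos _ (by omega), Multiset.erase_cons_head]

lemma mapsTo_fA (r : ℤ) : Set.MapsTo fA (Iset r) (Aset r) := by
  intro x hx
  have hs := sup_fA hx
  have he := congrArg Multiset.card (erase_fA hx)
  have hx' := hx
  obtain ⟨l, ν⟩ := x
  obtain ⟨h1, h2, h3⟩ := hx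
  simp only at *
  have hc := card_filter_ne ν
  refine ⟨⟨by simp [fA], h3.mono (Multiset.filter_le _ _)⟩, ?_, ?_⟩
  · rw [rk, hs]
    rcases Nat.eq_zero_or_pos l with rfl | h
    · have : fA (0, ν) = 0 := by
        rw [fA, Multiset.filter_eq_nil]; intro a ha; simp at ha
        rcases ha with rfl | ha
        · simp
        · simpa using h2 a ha
      rw [this]; simp at h1 ⊢; omega
    · have : l ∈ fA (l, ν) := by simp [fA]; omega
      rw [Multiset.card_erase_of_mem this] at he
      simp only [Nat.pred_eq_sub_one] at he
      omega
  · intro hr h0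
    rw [h0] at hs; simp at hs; subst hs; simp at h1; omega

lemma mapsTo_gA (r : ℤ) : Set.MapsTo (gA r) (Aset r) (Iset r) := by
  rintro s ⟨⟨h0, hn⟩, hr, he⟩
  have hle : ∀ y ∈ s, y ≤ s.sup := fun y hy => Multiset.le_sup hy
  rw [rk] at hr
  have hcard : (Multiset.card (s.erase s.sup) : ℤ) ≤ (((s.sup + 1) / 2 : ℕ) : ℤ) - r - 1 := by
    by_cases hs : s = 0
    · subst hs
      simp at he ⊢; omega
    · have := Multiset.card_erase_of_mem (sup_mem hs)
      have h' := Multiset.card_pos.2 hs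
      rw [this]; simp only [Nat.pred_eq_sub_one]; omega
  refine ⟨?_, ?_, ?_⟩
  · simp only [gA, Multiset.card_add, Multiset.card_replicate]
    push_cast
    rw [Int.toNat_of_nonneg (by omega)]; ring
  · intro y hy
    simp only [gA, Multiset.mem_add] at hy ⊢
    rcases hy with hy | hy
    · exact hle _ (Multiset.mem_of_mem_erase hy)
    · rw [Multiset.eq_of_mem_replicate hy]; exact Nat.zero_le _
  · intro i hi
    have hi0 : i ≠ 0 := by rintro rfl; simp at hi
    simp only [gA]
    rw [← Multiset.cons_add, Multiset.count_add, Multiset.count_replicate, if_neg (by omega), add_zero]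
    by_cases hs : s = 0
    · subst hs; simp [hi0]
    · rw [Multiset.cons_erase (sup_mem hs)]; exact hn i hi

lemma bijOn_fA (r : ℤ) : Set.BijOn fA (Iset r) (Aset r) := by
  refine Set.InvOn.bijOn (f' := gA r) ⟨?_, ?_⟩ (mapsTo_fA r) (mapsTo_gA r)
  · intro x hx
    have hc := card_filter_ne x.2
    have h1 := hx.1
    rw [gA, sup_fA hx, erase_fA hx]
    ext1
    · rfl
    · simp only
      conv_rhs => rw [← filter_add_zeros x.2]
      congr 2
      omega
  · rintro s ⟨⟨h0, hn⟩, hr, he⟩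
    simp only [fA, gA]
    rw [← Multiset.cons_add, Multiset.filter_add]
    have : (Multiset.replicate
        ((((s.sup + 1) / 2 : ℕ) : ℤ) - r - 1 - Multiset.card (s.erase s.sup)).toNat 0).filter (· ≠ 0) = 0 := by
      rw [Multiset.filter_eq_nil]; intro a ha
      simpa using Multiset.eq_of_mem_replicate ha
    rw [this, add_zero]
    by_cases hs : s = 0
    · subst hs; rfl
    · rw [Multiset.cons_erase (sup_mem hs), Multiset.filter_eq_self]
      intro a ha; rintro rfl; exact h0 ha

lemma count_map_add_two (s : Multiset ℕ) (i : ℕ) :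
    (s.map (· + 2)).count (i + 2) = s.count i :=
  Multiset.count_map_eq_count' _ _ (add_left_injective 2) i

lemma map_sub_add {s : Multiset ℕ} (h : ∀ x ∈ s, 2 ≤ x) : (s.map (· - 2)).map (· + 2) = s := by
  rw [Multiset.map_map]
  conv_rhs => rw [← Multiset.map_id s]
  refine Multiset.map_congr rfl fun x hx => ?_
  have := h x hx
  simp; omega

lemma erase_fB (x) : (fB x).erase 1 = x.2.map (· + 2) := by
  have h1 : 1 ∉ x.2.map (· + 2) := by simp
  rw [fB]
  split_ifs
  · rw [Multiset.erase_add_right_neg _ h1]; simp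
  · rw [add_zero, Multiset.erase_of_notMem h1]

lemma one_mem_fB (x) : 1 ∈ fB x ↔ Even x.1 := by
  rw [fB]; split_ifs with h <;> simp [h]

lemma mapsTo_fB (r : ℤ) : Set.MapsTo fB (Iset r) (Bset r) := by
  rintro ⟨l, ν⟩ ⟨h1, h2, h3⟩
  simp only at h1 h2 h3
  refine ⟨⟨?_, ?_⟩, ?_⟩
  · rw [fB]; split_ifs <;> simp
  · intro i hi
    match i, hi with
    | 1, _ =>
      have : (ν.map (· + 2)).count 1 = 0 := Multiset.count_eq_zero_of_notMem (by simp)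
      rw [fB, Multiset.count_add, this]
      split_ifs <;> simp
    | i + 2, hi =>
      have hi' : Odd i := by simpa [Nat.odd_add, show ¬ Odd 2 by decide] using hi
      rw [fB, Multiset.count_add, count_map_add_two]
      have a := h3 i hi'
      change Multiset.count i ν + _ ≤ 1
      have b := Multiset.count_le_count_cons i l ν
      split_ifs
      · rw [Multiset.count_singleton, if_neg (by omega)]; omega
      · simp; omega
  · rw [rk]
    by_cases hl : Even l
    · have : (fB (l, ν)).sup ≤ l + 2 := by
        refine Multiset.sup_le.2 fun b hb => ?_
        simp [fB, hl] at hb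
        rcases hb with ⟨a, ha, rfl⟩ | rfl
        · have := h2 a ha; omega
        · omega
      have hc : Multiset.card (fB (l, ν)) = Multiset.card ν + 1 := by simp [fB, hl]
      rw [hc]; push_cast; omega
    · have hl' := Nat.not_even_iff_odd.1 hl
      have : (fB (l, ν)).sup ≤ l + 1 := by
        refine Multiset.sup_le.2 fun b hb => ?_
        simp [fB, hl] at hb
        obtain ⟨a, ha, rfl⟩ := hb
        have := h2 a ha
        have hne : a ≠ l := by
          rintro rfl
          have a1 := h3 a hl'
          rw [Multiset.count_cons_self] at a1
          have := Multiset.count_pos.2 ha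
          omega
        omega
      have hc : Multiset.card (fB (l, ν)) = Multiset.card ν := by simp [fB, hl]
      rw [hc]
      obtain ⟨k, rfl⟩ := hl'
      omega

lemma two_le_of_mem_erase {s : Multiset ℕ} (hs : s ∈ Pset) : ∀ x ∈ s.erase 1, 2 ≤ x := by
  intro x hx
  have h0 : x ≠ 0 := by rintro rfl; exact hs.1 (Multiset.mem_of_mem_erase hx)
  have h1 : x ≠ 1 := by
    rintro rfl
    have a := Multiset.count_pos.2 hx
    rw [Multiset.count_erase_self] at a
    have := hs.2 1 odd_one
    omega
  omega

/-- The top part `2 (card s + r + 1) - 1` assigned to `s` when `1 ∉ s` is positive. The case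
`r = -1` is excluded because the empty partition, of rank `0`, would then get the top part `-1`. -/
lemma one_le_of_mem_Bset {r : ℤ} (hr : r ≠ -1) {s} (hs : s ∈ Bset r) :
    1 ≤ (Multiset.card s : ℤ) + r + 1 := by
  obtain ⟨hs, hrk⟩ := hs
  rw [rk] at hrk
  by_cases h0 : s = 0
  · subst h0; simp at hrk ⊢; omega
  · have a := sup_mem h0
    have : s.sup ≠ 0 := fun h => hs.1 (h ▸ a)
    omega

lemma mapsTo_gB {r : ℤ} (hr : r ≠ -1) : Set.MapsTo (gB r) (Bset r) (Iset r) := by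
  rintro s ⟨hs, hrk⟩
  have h2 := two_le_of_mem_erase hs
  have hle : ∀ y ∈ s, y ≤ s.sup := fun y hy => Multiset.le_sup hy
  rw [rk] at hrk
  have hcount : ∀ i, Odd i → ((s.erase 1).map (· - 2)).count i ≤ 1 := by
    intro i hi
    rw [← count_map_add_two, map_sub_add h2]
    exact (Multiset.count_le_of_le _ (Multiset.erase_le _ _)).trans
      (hs.2 _ (by simpa [Nat.odd_add, show ¬ Odd 2 by decide] using hi))
  by_cases h1 : 1 ∈ s
  · have hc := Multiset.card_erase_of_mem h1
    have hp := Multiset.card_pos_iff_exists_mem.2 ⟨1, h1⟩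
    have hs1 := hle 1 h1
    simp only [Nat.pred_eq_sub_one] at hc
    simp only [Iset, gB, Set.mem_ofPred_eq, Multiset.card_map, if_pos h1, sub_zero]
    refine ⟨by omega, ?_, ?_⟩
    · intro y hy
      obtain ⟨x, hx, rfl⟩ := Multiset.mem_map.1 hy
      have a := hle x (Multiset.mem_of_mem_erase hx)
      have b := h2 x hx
      omega
    · intro i hi
      rw [Multiset.count_cons_of_ne]
      · exact hcount i hi
      · obtain ⟨k, rfl⟩ := hi
        omega
  · have hc : s.erase 1 = s := Multiset.erase_of_notMem h1
    have hM := one_le_of_mem_Bset hr ⟨hs, hrk⟩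
    have hlt : ∀ y ∈ (s.erase 1).map (· - 2),
        y < (2 * ((Multiset.card (s.erase 1) : ℤ) + r + 1) - 1).toNat := by
      intro y hy
      obtain ⟨x, hx, rfl⟩ := Multiset.mem_map.1 hy
      have a := hle x (Multiset.mem_of_mem_erase hx)
      have b := h2 x hx
      rw [hc]
      omega
    simp only [Iset, gB, Set.mem_ofPred_eq, Multiset.card_map, if_neg h1]
    refine ⟨by rw [hc]; omega, fun y hy => (hlt y hy).le, ?_⟩
    intro i hi
    rw [Multiset.count_cons]
    split_ifs with h
    · rw [Multiset.count_eq_zero_of_notMem]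
      intro hm
      exact (hlt i hm).ne h
    · exact hcount i hi

lemma bijOn_fB {r : ℤ} (hr : r ≠ -1) : Set.BijOn fB (Iset r) (Bset r) := by
  refine Set.InvOn.bijOn (f' := gB r) ⟨?_, ?_⟩ (mapsTo_fB r) (mapsTo_gB hr)
  · intro x hx
    have h1 := hx.1
    rw [gB, erase_fB]
    ext1
    · simp only [one_mem_fB, Multiset.card_map]
      split_ifs with h
      · obtain ⟨k, hk⟩ := h
        omega
      · obtain ⟨k, hk⟩ := Nat.not_even_iff_odd.1 h
        omega
    · simp [Multiset.map_map]
  · rintro s hs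
    have h2 := two_le_of_mem_erase hs.1
    have hI := (mapsTo_gB hr hs).1
    have hev : Even (gB r s).1 ↔ 1 ∈ s := by
      simp only [gB, Multiset.card_map] at hI ⊢
      split_ifs at hI ⊢ with h
      · simp only [h, iff_true]
        rw [sub_zero] at hI ⊢
        rw [Nat.even_iff]
        omega
      · have hM := one_le_of_mem_Bset hr hs
        rw [Multiset.erase_of_notMem h]
        simp only [h, iff_false]
        rw [Nat.even_iff]
        omega
    rw [fB]
    simp only [hev]
    simp only [gB]
    rw [map_sub_add h2]
    split_ifs with h
    · rw [add_comm, Multiset.singleton_add, Multiset.cons_erase h]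
    · rw [add_zero, Multiset.erase_of_notMem h]

lemma sum_fA_fB {r : ℤ} {x} (hx : x ∈ Iset r) :
    ((fA x).sum : ℤ) = (fB x).sum + (2 * r + 1) := by
  have h1 := hx.1
  have hA : (fA x).sum = x.1 + x.2.sum := by
    have := congrArg Multiset.sum (filter_add_zeros (x.1 ::ₘ x.2))
    simpa [fA] using this
  have hB : (fB x).sum = x.2.sum + 2 * Multiset.card x.2 + if Even x.1 then 1 else 0 := by
    rw [fB, Multiset.sum_add, Multiset.sum_map_add]
    split_ifs <;> simp <;> ring
  rw [hA, hB]
  split_ifs with h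
  · obtain ⟨k, hk⟩ := h
    push_cast; omega
  · obtain ⟨k, hk⟩ := Nat.not_even_iff_odd.1 h
    push_cast; omega

/-- Trading the largest part: partitions of rank at least `r` correspond to partitions of rank at
most `r + 1` whose size is smaller by `2 r + 1`. -/
theorem tsum_Aset {r : ℤ} (hr : r ≠ -1) {q : ℂ} (hq : q ≠ 0) :
    ∑' s : Aset r, q ^ (s : Multiset ℕ).sum =
      q ^ (2 * r + 1) * ∑' s : Bset r, q ^ (s : Multiset ℕ).sum := by
  rw [← ((bijOn_fA r).equiv _).tsum_eq, ← ((bijOn_fB hr).equiv _).tsum_eq, ← tsum_mul_left]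
  refine tsum_congr fun x => ?_
  change q ^ (fA x).sum = _ * q ^ (fB x).sum
  rw [← zpow_natCast, ← zpow_natCast, sum_fA_fB x.2, zpow_add₀ hq, mul_comm]

/-! ### Generating functions by rank -/

/-- Partitions of all sizes, as multisets of positive integers. -/
def sigmaEquiv : (Σ n : ℕ, n.Partition) ≃ {s : Multiset ℕ | 0 ∉ s} where
  toFun x := ⟨x.2.parts, fun h => lt_irrefl 0 (x.2.parts_pos h)⟩
  invFun s :=
    ⟨s.1.sum, ⟨s.1, fun {i} hi => Nat.pos_of_ne_zero (by rintro rfl; exact s.2 hi), rfl⟩⟩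
  left_inv x := by
    obtain ⟨n, p, hp, rfl⟩ := x
    rfl
  right_inv s := rfl

lemma card_partition_le (n : ℕ) : Fintype.card n.Partition ≤ 2 ^ n := by
  refine (Fintype.card_le_of_surjective _ Nat.Partition.ofComposition_surj).trans ?_
  rw [composition_card]
  exact Nat.pow_le_pow_right (by norm_num) (Nat.sub_le _ _)

lemma summable_partitions {x : ℝ} (h0 : 0 ≤ x) (h1 : x < 1 / 2) :
    Summable fun y : Σ n : ℕ, n.Partition => x ^ y.1 := by
  rw [summable_sigma_of_nonneg (fun _ => by positivity)]
  refine ⟨fun n => (hasSum_fintype _).summable, ?_⟩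
  refine Summable.of_nonneg_of_le (fun n => tsum_nonneg fun _ => by positivity) (fun n => ?_)
    (summable_geometric_of_lt_one (r := 2 * x) (by positivity) (by linarith))
  simp only
  rw [tsum_fintype, Finset.sum_const, nsmul_eq_mul, mul_pow, Finset.card_univ]
  gcongr
  exact_mod_cast card_partition_le n

/-- The weight `q ^ |s|` of a partition without repeated odd parts, and `0` for other multisets. -/
noncomputable def wt (q : ℂ) (s : Multiset ℕ) : ℂ := Pset.indicator (fun s => q ^ s.sum) s

lemma summable_wt_norm {q : ℂ} (h1 : ‖q‖ < 1 / 2) : Summable fun s => ‖wt q s‖ := by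
  have a := (sigmaEquiv.symm.summable_iff).2 (summable_partitions (norm_nonneg q) h1)
  have b : Summable (fun s : {s : Multiset ℕ | 0 ∉ s} => ‖q‖ ^ (s : Multiset ℕ).sum) := a
  rw [← Function.comp_def (fun s : Multiset ℕ => ‖q‖ ^ s.sum) Subtype.val,
    summable_subtype_iff_indicator] at b
  refine b.of_nonneg_of_le (fun _ => norm_nonneg _) fun s => ?_
  classical
  rw [wt, Set.indicator_apply, Set.indicator_apply]
  split_ifs with h h' h'
  · simp
  · exact absurd h.1 h'
  · simp
  · simp

/-- A weighted generating function of partitions without repeated odd parts. -/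
noncomputable def Sg (q : ℂ) (c : Multiset ℕ → ℂ) : ℂ := ∑' s, c s * wt q s

lemma summable_Sg {q : ℂ} (h1 : ‖q‖ < 1 / 2) {c : Multiset ℕ → ℂ} {C : ℝ} (hc : ∀ s, ‖c s‖ ≤ C) :
    Summable fun s => c s * wt q s := by
  refine Summable.of_norm_bounded ((summable_wt_norm h1).mul_left C) fun s => ?_
  rw [norm_mul]; exact mul_le_mul_of_nonneg_right (hc s) (norm_nonneg _)

open Classical in
/-- The 0/1-valued weight of a predicate. -/
noncomputable def ind (p : Prop) : ℂ := if p then 1 else 0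

lemma ind_norm (p : Prop) : ‖ind p‖ ≤ 1 := by
  unfold ind; split_ifs <;> simp

/-- Generating function of rank at least `r`. -/
noncomputable def Qr (q : ℂ) (r : ℤ) : ℂ := Sg q fun s => ind (r ≤ rk s)

/-- Generating function of all partitions without repeated odd parts. -/
noncomputable def Pq (q : ℂ) : ℂ := Sg q fun _ => 1

/-- Rewriting a sum over a set of partitions as a weighted sum over all multisets. -/
lemma tsum_set {q : ℂ} {p : Multiset ℕ → Prop} {A : Set (Multiset ℕ)}
    (hA : ∀ s, s ∈ A ↔ s ∈ Pset ∧ p s) :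
    ∑' s : A, q ^ (s : Multiset ℕ).sum = Sg q fun s => ind (p s) := by
  rw [tsum_subtype A (fun s : Multiset ℕ => q ^ s.sum), Sg]
  refine tsum_congr fun s => ?_
  classical
  rw [wt, Set.indicator_apply, Set.indicator_apply, ind]
  by_cases a : s ∈ Pset <;> by_cases b : p s <;> simp [a, b, hA]

lemma Sg_add {q : ℂ} (h1 : ‖q‖ < 1 / 2)
    {c d : Multiset ℕ → ℂ} {C D : ℝ} (hc : ∀ s, ‖c s‖ ≤ C) (hd : ∀ s, ‖d s‖ ≤ D) :
    Sg q c + Sg q d = Sg q fun s => c s + d s := by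
  rw [Sg, Sg, ← (summable_Sg h1 hc).tsum_add (summable_Sg h1 hd), Sg]
  simp only [add_mul]

lemma Sg_sub {q : ℂ} (h1 : ‖q‖ < 1 / 2)
    {c d : Multiset ℕ → ℂ} {C D : ℝ} (hc : ∀ s, ‖c s‖ ≤ C) (hd : ∀ s, ‖d s‖ ≤ D) :
    Sg q c - Sg q d = Sg q fun s => c s - d s := by
  rw [Sg, Sg, ← (summable_Sg h1 hc).tsum_sub (summable_Sg h1 hd), Sg]
  simp only [sub_mul]

lemma Bset_eq {q : ℂ} (h1 : ‖q‖ < 1 / 2)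
    (r : ℤ) : ∑' s : Bset r, q ^ (s : Multiset ℕ).sum = Pq q - Qr q (r + 2) := by
  rw [tsum_set (A := Bset r) (p := fun s => rk s ≤ r + 1) (fun s => Iff.rfl), Pq, Qr,
    Sg_sub h1 (C := 1) (D := 1) (by simp) (fun _ => ind_norm _)]
  congr 1; funext s
  by_cases h : r + 2 ≤ rk s
  · simp [ind, h]; omega
  · simp [ind, h]; omega

lemma Qr_rec {q : ℂ} (h1 : ‖q‖ < 1 / 2) {r : ℤ} (hr : 1 ≤ r ∨ r ≤ -2) (hq : q ≠ 0) :
    Qr q r = q ^ (2 * r + 1) * (Pq q - Qr q (r + 2)) := by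
  rw [← Bset_eq h1, ← tsum_Aset (by omega) hq]
  symm
  apply tsum_set
  intro s
  refine ⟨fun h => ⟨h.1, h.2.1⟩, fun h => ⟨h.1, h.2, ?_⟩⟩
  rintro h' rfl
  have := h.2
  simp [rk] at this; omega

/-- The case `r = 0` of the recurrence: the summand `1` is the empty partition, which `Aset 0` omits. -/
lemma Qr_zero {q : ℂ} (h1 : ‖q‖ < 1 / 2) (hq : q ≠ 0) : Qr q 0 = 1 + q * (Pq q - Qr q 2) := by
  have h := tsum_Aset (r := 0) (by omega) hq
  rw [Bset_eq h1, tsum_set (A := Aset 0) (p := fun s => 0 ≤ rk s ∧ s ≠ 0)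
    (by intro s; simp [Aset]; tauto)] at h
  simp only [mul_zero, zero_add, zpow_one] at h
  rw [← h, Qr]
  have h3 : (1 : ℂ) = Sg q fun s => ind (s = 0) := by
    rw [Sg, tsum_eq_single 0 (fun s hs => by simp [ind, hs])]
    simp [ind, wt, Pset, NoRep]
  conv_rhs => rw [h3]
  rw [Sg_add h1 (C := 1) (D := 1) (fun _ => ind_norm _) (fun _ => ind_norm _)]
  congr 1; funext s
  by_cases h : s = 0
  · subst h; simp [ind, rk]
  · simp [ind, h]

/-! ### Solving the recurrences -/

/-- A bounded sequence dominated by half of its shift by `2` vanishes from index `1` on. -/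
lemma contraction {F : ℕ → ℂ} {C : ℝ} (hC : ∀ r, ‖F r‖ ≤ C)
    (hF : ∀ r, 1 ≤ r → ‖F r‖ ≤ 1 / 2 * ‖F (r + 2)‖) {r : ℕ} (hr : 1 ≤ r) : F r = 0 := by
  have h : ∀ k r : ℕ, 1 ≤ r → ‖F r‖ ≤ (1 / 2) ^ k * C := by
    intro k
    induction k with
    | zero => intro r _; simpa using hC r
    | succ k ih =>
      intro r hr
      have := ih (r + 2) (by omega)
      calc _ ≤ _ := hF r hr
        _ ≤ 1 / 2 * ((1 / 2) ^ k * C) := by gcongr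
        _ = _ := by ring
  have ht : Filter.Tendsto (fun k : ℕ => (1 / 2 : ℝ) ^ k * C) Filter.atTop (nhds (0 * C)) :=
    (tendsto_pow_atTop_nhds_zero_of_lt_one (by norm_num) (by norm_num)).mul_const C
  have := ge_of_tendsto' ht fun k => h k r hr
  rw [zero_mul] at this
  exact norm_le_zero_iff.1 this

lemma norm_Sg_le {q : ℂ} (h1 : ‖q‖ < 1 / 2) {c : Multiset ℕ → ℂ} (hc : ∀ s, ‖c s‖ ≤ 1) :
    ‖Sg q c‖ ≤ ∑' s, ‖wt q s‖ := by
  refine tsum_of_norm_bounded (summable_wt_norm h1).hasSum fun s => ?_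
  rw [norm_mul]
  exact mul_le_of_le_one_left (norm_nonneg _) (hc s)

lemma norm_Qr_le {q : ℂ} (h1 : ‖q‖ < 1 / 2) (r : ℤ) : ‖Qr q r‖ ≤ ∑' s, ‖wt q s‖ :=
  norm_Sg_le h1 fun _ => ind_norm _

lemma norm_Pq_le {q : ℂ} (h1 : ‖q‖ < 1 / 2) : ‖Pq q‖ ≤ ∑' s, ‖wt q s‖ :=
  norm_Sg_le h1 fun _ => by simp

lemma norm_pow_odd_le {q : ℂ} (h1 : ‖q‖ < 1 / 2) (r : ℕ) : ‖q ^ (2 * r + 1)‖ ≤ 1 / 2 := by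
  rw [norm_pow, pow_succ]
  have := pow_le_one₀ (n := 2 * r) (norm_nonneg q) (by linarith)
  have h0 := norm_nonneg q
  nlinarith

/-- Symmetry of the rank: rank at least `r` and rank at most `-r` are equidistributed. The difference of
the two generating functions solves the homogeneous recurrence, so `contraction` applies. -/
lemma Qr_sym {q : ℂ} (h1 : ‖q‖ < 1 / 2) (hq : q ≠ 0) {r : ℕ} (hr : 1 ≤ r) :
    Qr q r + Qr q (1 - r) = Pq q := by
  rw [← sub_eq_zero]
  refine contraction (F := fun r : ℕ => Qr q r + Qr q (1 - r) - Pq q)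
    (C := 3 * ∑' s, ‖wt q s‖) (fun r => ?_) (fun r hr => ?_) hr
  · have a := norm_Qr_le h1 r
    have b := norm_Qr_le h1 (1 - r)
    have c := norm_Pq_le h1
    have d := norm_sub_le (Qr q r + Qr q (1 - r)) (Pq q)
    have e := norm_add_le (Qr q r) (Qr q (1 - r))
    linarith
  · have a := Qr_rec h1 (r := r) (by omega) hq
    have b := Qr_rec h1 (r := -1 - r) (by omega) hq
    have e : (2 * (-1 - (r : ℤ)) + 1) = -(2 * r + 1) := by ring
    rw [e, zpow_neg, show (-1 - (r : ℤ)) + 2 = 1 - r by ring] at b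
    have hz : q ^ (2 * (r : ℤ) + 1) ≠ 0 := zpow_ne_zero _ hq
    have : Qr q r + Qr q (1 - r) - Pq q
        = -q ^ (2 * r + 1) * (Qr q ((r + 2 : ℕ)) + Qr q (1 - (r + 2 : ℕ)) - Pq q) := by
      have e1 : (1 - ((r + 2 : ℕ) : ℤ)) = -1 - r := by push_cast; ring
      have e2 : ((r + 2 : ℕ) : ℤ) = r + 2 := by push_cast; ring
      have e3 : q ^ (2 * r + 1) = q ^ (2 * (r : ℤ) + 1) := by norm_cast
      rw [e1, e2, b, e3, a]
      field_simp
      ring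
    rw [this, norm_mul, norm_neg]
    exact mul_le_mul_of_nonneg_right (norm_pow_odd_le h1 r) (norm_nonneg _)

/-- The one-sided theta series `U_r = ∑_{k ≥ 1} Q ^ (2 k ^ 2 - k + 2 r k)`. -/
noncomputable def U (Q : ℂ) (r : ℕ) : ℂ := ∑' n : ℕ, Q ^ ((n + 1) * (2 * n + 1 + 2 * r))

lemma norm_U_term {Q : ℂ} (h1 : ‖Q‖ < 1 / 2) (r n : ℕ) :
    ‖Q ^ ((n + 1) * (2 * n + 1 + 2 * r))‖ ≤ ‖Q‖ ^ r * ‖Q‖ ^ n := by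
  rw [norm_pow, ← pow_add]
  exact pow_le_pow_of_le_one (norm_nonneg _) (by linarith) (by nlinarith)

lemma summable_U {Q : ℂ} (h1 : ‖Q‖ < 1 / 2) (r : ℕ) :
    Summable fun n : ℕ => Q ^ ((n + 1) * (2 * n + 1 + 2 * r)) :=
  Summable.of_norm_bounded ((summable_geometric_of_lt_one (norm_nonneg Q) (by linarith)).mul_left _)
    (norm_U_term h1 r)

lemma norm_U_le {Q : ℂ} (h1 : ‖Q‖ < 1 / 2) (r : ℕ) : ‖U Q r‖ ≤ (1 - ‖Q‖)⁻¹ := by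
  refine tsum_of_norm_bounded (hasSum_geometric_of_lt_one (norm_nonneg Q) (by linarith)) fun n => ?_
  refine (norm_U_term h1 r n).trans (mul_le_of_le_one_left (by positivity) ?_)
  exact pow_le_one₀ (norm_nonneg _) (by linarith)

lemma U_rec {Q : ℂ} (h1 : ‖Q‖ < 1 / 2) (r : ℕ) : U Q r = Q ^ (2 * r + 1) * (1 + U Q (r + 2)) := by
  rw [U, (summable_U h1 r).tsum_eq_zero_add, mul_add (Q ^ _), mul_one (Q ^ _), U, ← tsum_mul_left]
  congr 1
  · congr 1; ring
  · refine tsum_congr fun n => ?_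
    rw [← pow_add]; congr 1; ring

lemma psi_eq_U {Q : ℂ} (h1 : ‖Q‖ < 1 / 2) : psi Q = 1 + U Q 0 + U Q 1 := by
  have a : ∀ n : ℕ, Q ^ (((n : ℤ) + 1) * (2 * ((n : ℤ) + 1) - 1))
      = Q ^ ((n + 1) * (2 * n + 1 + 2 * 0)) := by
    intro n; rw [← zpow_natCast]; congr 1; push_cast; ring
  have b : ∀ n : ℕ, Q ^ (-((n : ℤ) + 1) * (2 * -((n : ℤ) + 1) - 1))
      = Q ^ ((n + 1) * (2 * n + 1 + 2 * 1)) := by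
    intro n; rw [← zpow_natCast]; congr 1
  rw [psi, tsum_of_add_one_of_neg_add_one ((summable_U h1 0).congr fun n => (a n).symm)
    ((summable_U h1 1).congr fun n => (b n).symm), tsum_congr a, tsum_congr b, zero_mul, zpow_zero,
    U, U]
  ring

/-- Both sides solve the same recurrence, so `contraction` applies to their difference. -/
lemma Qr_eq_U {Q : ℂ} (h1 : ‖Q‖ < 1 / 2) (hQ : Q ≠ 0)
    {r : ℕ} (hr : 1 ≤ r) : Qr (-Q) r = - Pq (-Q) * U Q r := by
  have h1' : ‖-Q‖ < 1 / 2 := by rwa [norm_neg]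
  rw [← sub_eq_zero]
  refine contraction (F := fun r : ℕ => Qr (-Q) r - - Pq (-Q) * U Q r)
    (C := (∑' s, ‖wt (-Q) s‖) + (∑' s, ‖wt (-Q) s‖) * (1 - ‖Q‖)⁻¹) (fun r => ?_) (fun r hr => ?_) hr
  · refine (norm_sub_le _ _).trans ?_
    rw [norm_mul, norm_neg]
    exact add_le_add (norm_Qr_le h1' _) (mul_le_mul (norm_Pq_le h1') (norm_U_le h1 r)
      (norm_nonneg _) (tsum_nonneg fun _ => norm_nonneg _))
  · have a := Qr_rec h1' (r := r) (by omega) (neg_ne_zero.2 hQ)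
    have e : (-Q) ^ (2 * (r : ℤ) + 1) = - Q ^ (2 * r + 1) := by
      rw [← Odd.neg_pow ⟨r, rfl⟩]; norm_cast
    have : Qr (-Q) r - - Pq (-Q) * U Q r
        = Q ^ (2 * r + 1) * (Qr (-Q) (r + 2 : ℕ) - - Pq (-Q) * U Q (r + 2)) := by
      rw [U_rec h1 r, a, e]; push_cast; ring
    rw [this, norm_mul]
    exact mul_le_mul_of_nonneg_right (norm_pow_odd_le h1 r) (norm_nonneg _)

lemma Qr_zero_eq_U {Q : ℂ} (h1 : ‖Q‖ < 1 / 2) (hQ : Q ≠ 0) : Qr (-Q) 0 = 1 - Pq (-Q) * U Q 0 := by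
  have h1' : ‖-Q‖ < 1 / 2 := by rwa [norm_neg]
  have := Qr_eq_U h1 hQ (r := 2) (by norm_num)
  rw [Qr_zero h1' (neg_ne_zero.2 hQ), U_rec h1 0]
  push_cast at this
  rw [this]; ring

/-- The generating function of partitions without repeated odd parts, from `Q_0` and `Q_1` being
complementary up to the symmetry of the rank. -/
lemma Pq_mul_psi {Q : ℂ} (h1 : ‖Q‖ < 1 / 2) (hQ : Q ≠ 0) : Pq (-Q) * psi Q = 1 := by
  have h1' : ‖-Q‖ < 1 / 2 := by rwa [norm_neg]
  have a := Qr_sym h1' (neg_ne_zero.2 hQ) (le_refl 1)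
  have b := Qr_eq_U h1 hQ (le_refl 1)
  push_cast at a b
  rw [b, Qr_zero_eq_U h1 hQ] at a
  rw [psi_eq_U h1]
  linear_combination -a

/-! ### The generating function of the rank difference -/

/-- The class function on ranks whose weighted count is `N₂(0,5,n) - N₂(2,5,n)`. -/
noncomputable def cc (m : ℤ) : ℂ := ind (m % 5 = 0) - ind (m % 5 = 2)

lemma cc_norm (m : ℤ) : ‖cc m‖ ≤ 2 :=
  (norm_sub_le _ _).trans ((add_le_add (ind_norm _) (ind_norm _)).trans (by norm_num))

/-- The combined weight of the ranks `n` and `-n`. -/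
noncomputable def ct (n : ℕ) : ℂ := cc n + cc (-n)

lemma ct_norm (m : ℕ) : ‖ct m‖ ≤ 4 :=
  (norm_add_le _ _).trans ((add_le_add (cc_norm _) (cc_norm _)).trans (by norm_num))

/-- The generating function of `N₂(0,5,n) - N₂(2,5,n)`. -/
noncomputable def Dq (q : ℂ) : ℂ := Sg q fun s => cc (rk s)

lemma hasSum_of_eq {ι : Type*} {f g : ι → ℂ} {a b : ℂ} (h : HasSum f a) (hf : ∀ n, g n = f n)
    (hab : b = a) : HasSum g b := by
  rwa [hab, funext hf]

/-- `Dq` sorted by rank: `Qr q m - Qr q (m + 1)` counts the partitions of rank exactly `m`. -/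
lemma Dq_hasSum {q : ℂ} (h1 : ‖q‖ < 1 / 2) :
    HasSum (fun m : ℤ => cc m * (Qr q m - Qr q (m + 1))) (Dq q) := by
  have h := (summable_Sg h1 (c := fun s => cc (rk s)) fun s => cc_norm _).hasSum.tsum_fiberwise rk
  refine hasSum_of_eq h (fun m => ?_) rfl
  rw [tsum_subtype (rk ⁻¹' {m}) (fun s => cc (rk s) * wt q s), Qr, Qr,
    Sg_sub h1 (C := 1) (D := 1) (fun _ => ind_norm _) (fun _ => ind_norm _), Sg, ← tsum_mul_left]
  refine tsum_congr fun s => ?_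
  classical
  rw [Set.indicator_apply]
  rcases lt_trichotomy (rk s) m with h | h | h
  · have a : ¬ m ≤ rk s := by omega
    have b : ¬ m + 1 ≤ rk s := by omega
    simp [ind, a, b, h.ne]
  · simp [ind, h]
  · have a : m ≤ rk s := by omega
    have b : m + 1 ≤ rk s := by omega
    simp [ind, a, b, h.ne']

lemma ct_tsum {X : ℂ} (hX : ‖X‖ < 1) :
    ∑' n : ℕ, ct (n + 1) * X ^ (n + 1) = (2 * X ^ 5 - X ^ 2 - X ^ 3) / (1 - X ^ 5) := by
  have hs : Summable fun n : ℕ => ct (n + 1) * X ^ (n + 1) := by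
    refine Summable.of_norm_bounded ((summable_geometric_of_lt_one (norm_nonneg X) hX).mul_left 4)
      fun n => ?_
    rw [norm_mul, norm_pow]
    exact mul_le_mul (ct_norm _) (pow_le_pow_of_le_one (norm_nonneg _) hX.le (by omega))
      (by positivity) (by norm_num)
  have h5 : 1 - X ^ 5 ≠ 0 := by
    intro h
    have : ‖X ^ 5‖ < 1 := by rw [norm_pow]; exact pow_lt_one₀ (norm_nonneg _) hX (by norm_num)
    rw [← sub_eq_zero.1 h] at this
    simp at this
  have h := hs.sum_add_tsum_nat_add 5
  have e : ∀ n : ℕ, ct (n + 5 + 1) * X ^ (n + 5 + 1) = X ^ 5 * (ct (n + 1) * X ^ (n + 1)) := by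
    intro n
    have : ct (n + 5 + 1) = ct (n + 1) := by
      unfold ct cc
      have e1 : (((n + 5 + 1 : ℕ) : ℤ)) % 5 = ((n + 1 : ℕ) : ℤ) % 5 := by omega
      have e2 : (-((n + 5 + 1 : ℕ) : ℤ)) % 5 = (-((n + 1 : ℕ) : ℤ)) % 5 := by omega
      rw [e1, e2]
    rw [this]; ring
  rw [tsum_congr e, tsum_mul_left] at h
  rw [eq_div_iff h5]
  have c1 : ct 1 = 0 := by norm_num [ct, cc, ind]
  have c2 : ct 2 = -1 := by norm_num [ct, cc, ind]
  have c3 : ct 3 = -1 := by norm_num [ct, cc, ind]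
  have c4 : ct 4 = 0 := by norm_num [ct, cc, ind]
  have c5 : ct 5 = 2 := by norm_num [ct, cc, ind]
  simp only [Finset.sum_range_succ, Finset.sum_range_zero, zero_add, Nat.reduceAdd, c1, c2, c3, c4, c5] at h
  linear_combination -h

lemma norm_X_lt {Q : ℂ} (h1 : ‖Q‖ < 1 / 2) (k : ℕ) : ‖Q ^ (2 * (k + 1))‖ < 1 := by
  rw [norm_pow]; exact pow_lt_one₀ (norm_nonneg _) (by linarith) (by omega)

lemma one_sub_ne {Q : ℂ} (h1 : ‖Q‖ < 1 / 2) (k : ℕ) : 1 - (Q ^ (2 * (k + 1))) ^ 5 ≠ 0 := by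
  have hX : ‖Q ^ (2 * (k + 1))‖ < 1 := norm_X_lt h1 k
  intro h
  have : ‖(Q ^ (2 * (k + 1))) ^ 5‖ < 1 := by
    rw [norm_pow]; exact pow_lt_one₀ (norm_nonneg _) hX (by norm_num)
  rw [← sub_eq_zero.1 h] at this
  simp at this

/-- `Dq_hasSum` with the ranks `n + 1` and `-(n + 1)` combined and the `Qr` expressed through `U`; the
subtracted term is the contribution of rank `0`. -/
lemma psi_mul_Dq_hasSum {Q : ℂ} (h1 : ‖Q‖ < 1 / 2) (hQ : Q ≠ 0) :
    HasSum (fun n : ℕ => ct (n + 1) * (U Q (n + 2) - U Q (n + 1)))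
    (psi Q * Dq (-Q) - (1 + 2 * U Q 1)) := by
  have h1' : ‖-Q‖ < 1 / 2 := by rwa [norm_neg]
  have hP := Pq_mul_psi h1 hQ
  have h := (hasSum_nat_add_iff' 1).2 (Dq_hasSum h1').nat_add_neg
  have h := h.mul_left (psi Q)
  have R0 : Qr (-Q) 0 - Qr (-Q) 1 = 1 - Pq (-Q) * U Q 0 + Pq (-Q) * U Q 1 := by
    have := Qr_eq_U h1 hQ (le_refl 1)
    push_cast at this
    rw [Qr_zero_eq_U h1 hQ, this]; ring
  have c0 : cc 0 = 1 := by norm_num [cc, ind]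
  simp only [Finset.sum_range_one, Nat.cast_zero, neg_zero, zero_add, c0, one_mul, R0] at h
  refine hasSum_of_eq h (fun n => ?_) ?_
  · have a := Qr_sym h1' (neg_ne_zero.2 hQ) (r := n + 1) (by omega)
    have b := Qr_sym h1' (neg_ne_zero.2 hQ) (r := n + 2) (by omega)
    have c := Qr_eq_U h1 hQ (r := n + 1) (by omega)
    have d := Qr_eq_U h1 hQ (r := n + 2) (by omega)
    have e1 : ((n + 1 : ℕ) : ℤ) + 1 = (n + 2 : ℕ) := by push_cast; ring
    have e2 : -((n + 1 : ℕ) : ℤ) = 1 - (n + 2 : ℕ) := by push_cast; ring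
    have e3 : -((n + 1 : ℕ) : ℤ) + 1 = 1 - (n + 1 : ℕ) := by push_cast; ring
    have e4 : Qr (-Q) (-((n + 1 : ℕ) : ℤ)) - Qr (-Q) (-((n + 1 : ℕ) : ℤ) + 1)
        = Qr (-Q) (n + 1 : ℕ) - Qr (-Q) (n + 2 : ℕ) := by
      rw [e3, e2]; linear_combination b - a
    rw [e4, e1, ← add_mul, ← ct, c, d]
    linear_combination -ct (n + 1) * (U Q (n + 2) - U Q (n + 1)) * hP
  · rw [psi_eq_U h1] at hP ⊢
    linear_combination (-U Q 0 + U Q 1) * hP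

/-- The terms of `Gs` with indices `k + 1` and `-(k + 1)` combined. -/
lemma Gs_eq_nat {Q : ℂ} (h1 : ‖Q‖ < 1 / 2) (hQ : Q ≠ 0) :
    Gs Q = 1 + ∑' k : ℕ, Q ^ ((k + 1) * (2 * k + 1)) *
    ((2 * (Q ^ (2 * (k + 1))) + (Q ^ (2 * (k + 1))) ^ 2 - 2 * (Q ^ (2 * (k + 1))) ^ 5
      - (Q ^ (2 * (k + 1))) ^ 4) / (1 - (Q ^ (2 * (k + 1))) ^ 5)) := by
  obtain ⟨f, hf⟩ : ∃ f : ℤ → ℂ, ∀ i, f i =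
      Q ^ (i * (2 * i - 1)) * (2 * Q ^ (2 * i) + Q ^ (4 * i)) / (1 - Q ^ (10 * i)) :=
    ⟨_, fun _ => rfl⟩
  have hsum : Summable f := by
    refine (((sum_Gs hQ h1 1).mul_left 2).add (sum_Gs hQ h1 2)).congr fun i => ?_
    rw [hf]
    norm_num
    ring
  have p1 : Summable fun n : ℕ => f ((n : ℤ) + 1) :=
    hsum.comp_injective (i := fun n : ℕ => (n : ℤ) + 1) (fun a b h => by simpa using h)
  have p2 : Summable fun n : ℕ => f (-((n : ℤ) + 1)) :=
    hsum.comp_injective (i := fun n : ℕ => -((n : ℤ) + 1)) (fun a b h => by simpa using h)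
  have f0 : f 0 = 0 := by rw [hf]; simp
  rw [Gs, ← tsum_congr hf, tsum_of_add_one_of_neg_add_one p1 p2, f0, add_zero, ← p1.tsum_add p2]
  congr 1
  refine tsum_congr fun k => ?_
  rw [hf, hf]
  have z : ∀ m : ℕ, Q ^ (2 * m * ((k : ℤ) + 1)) = (Q ^ (2 * (k + 1))) ^ m := by
    intro m; rw [← pow_mul, ← zpow_natCast]; congr 1; push_cast; ring
  have z1 := z 1
  have z2 := z 2
  have z5 := z 5
  norm_num at z1 z2 z5
  have y1 : Q ^ (((k : ℤ) + 1) * (2 * ((k : ℤ) + 1) - 1)) = Q ^ ((k + 1) * (2 * k + 1)) := by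
    rw [← zpow_natCast]; congr 1; push_cast; ring
  have y2 : Q ^ (-((k : ℤ) + 1) * (2 * -((k : ℤ) + 1) - 1))
      = Q ^ ((k + 1) * (2 * k + 1)) * Q ^ (2 * (k + 1)) := by
    have : -((k : ℤ) + 1) * (2 * -((k : ℤ) + 1) - 1)
        = ((k + 1) * (2 * k + 1) + 2 * (k + 1) : ℕ) := by push_cast; ring
    rw [← pow_add, this, zpow_natCast]
  rw [y1, y2, mul_neg, mul_neg, mul_neg, zpow_neg, zpow_neg, zpow_neg, z1, z2, z5]
  have hk := one_sub_ne h1 k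
  have hX0 : Q ^ (2 * (k + 1)) ≠ 0 := pow_ne_zero _ hQ
  generalize Q ^ (2 * (k + 1)) = X at *
  have hk' : 1 - (X ^ 5)⁻¹ ≠ 0 := by
    intro h
    apply hk
    rw [sub_eq_zero, eq_comm, inv_eq_one] at h
    rw [h, sub_self]
  have : 1 - (X ^ 5)⁻¹ = -(1 - X ^ 5) / X ^ 5 := by field_simp; ring
  rw [this]
  field_simp
  ring

/-- The double series over the rank and the theta index is summed over the rank first. -/
lemma psi_mul_Dq {Q : ℂ} (h1 : ‖Q‖ < 1 / 2) (hQ : Q ≠ 0) : psi Q * Dq (-Q) = Gs Q := by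
  have hg : Summable fun n : ℕ => ‖Q‖ ^ n :=
    summable_geometric_of_lt_one (norm_nonneg Q) (by linarith)
  -- the summand of the double series over the rank `n + 1` and the theta index `k + 1`
  let F : ℕ → ℕ → ℂ := fun n k => ct (n + 1) * (Q ^ ((k + 1) * (2 * k + 1 + 2 * (n + 2 : ℕ)))
    - Q ^ ((k + 1) * (2 * k + 1 + 2 * (n + 1 : ℕ))))
  have hF : Summable (Function.uncurry F) := by
    refine Summable.of_norm_bounded ((hg.mul_of_nonneg hg (fun _ => by positivity)
      (fun _ => by positivity)).mul_left 8) ?_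
    rintro ⟨n, k⟩
    have a := norm_U_term h1 (n + 2) k
    have b := norm_U_term h1 (n + 1) k
    have c : ‖Q‖ ^ (n + 2) ≤ ‖Q‖ ^ n :=
      pow_le_pow_of_le_one (norm_nonneg _) (by linarith) (by omega)
    have d : ‖Q‖ ^ (n + 1) ≤ ‖Q‖ ^ n :=
      pow_le_pow_of_le_one (norm_nonneg _) (by linarith) (by omega)
    have p : 0 ≤ ‖Q‖ ^ k := by positivity
    simp only [Function.uncurry, F]
    rw [norm_mul]
    calc _ ≤ 4 * (‖Q‖ ^ n * ‖Q‖ ^ k + ‖Q‖ ^ n * ‖Q‖ ^ k) := by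
          refine mul_le_mul (ct_norm _) ((norm_sub_le _ _).trans (add_le_add ?_ ?_))
            (norm_nonneg _) (by norm_num)
          · exact a.trans (by gcongr)
          · exact b.trans (by gcongr)
      _ = _ := by ring
  have hD := (psi_mul_Dq_hasSum h1 hQ).tsum_eq
  have e1 : ∀ n : ℕ, ct (n + 1) * (U Q (n + 2) - U Q (n + 1)) = ∑' k, F n k := by
    intro n
    rw [tsum_mul_left, (summable_U h1 _).tsum_sub (summable_U h1 _)]; rfl
  have e2 : ∀ k : ℕ, ∑' n, F n k = Q ^ ((k + 1) * (2 * k + 1)) * ((Q ^ (2 * (k + 1)) - 1) *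
      ((2 * (Q ^ (2 * (k + 1))) ^ 5 - (Q ^ (2 * (k + 1))) ^ 2 - (Q ^ (2 * (k + 1))) ^ 3) /
        (1 - (Q ^ (2 * (k + 1))) ^ 5))) := by
    intro k
    rw [← ct_tsum (norm_X_lt h1 k), ← tsum_mul_left, ← tsum_mul_left]
    refine tsum_congr fun n => ?_
    simp only [F]; ring
  rw [tsum_congr e1, ← hF.tsum_comm, tsum_congr e2] at hD
  have s2 := hF.prod_symm.prod
  have s2 : Summable fun k : ℕ => ∑' n, F n k := s2
  rw [funext e2] at s2
  rw [Gs_eq_nat h1 hQ]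
  have hU : 2 * U Q 1 = ∑' k : ℕ, 2 * (Q ^ ((k + 1) * (2 * k + 1)) * Q ^ (2 * (k + 1))) := by
    rw [U, ← tsum_mul_left]
    refine tsum_congr fun k => ?_
    rw [← pow_add]; congr 2; ring
  have sU : Summable fun k : ℕ => 2 * (Q ^ ((k + 1) * (2 * k + 1)) * Q ^ (2 * (k + 1))) := by
    refine ((summable_U h1 1).mul_left 2).congr fun k => ?_
    rw [← pow_add]; congr 2; ring
  rw [eq_sub_iff_add_eq, hU, add_left_comm, add_comm (∑' _, _), ← sU.tsum_add s2] at hD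
  rw [← hD]
  congr 1
  refine tsum_congr fun k => ?_
  have hk := one_sub_ne h1 k
  generalize Q ^ (2 * (k + 1)) = X at *
  field_simp
  ring

/-! ### Extraction of the coefficients -/

/-- `N₂(0,5,n) - N₂(2,5,n)` as a complex number. -/
noncomputable def dn (n : ℕ) : ℂ := (N2 0 5 n : ℂ) - N2 2 5 n

lemma N2_eq (s n : ℕ) (hs : s < 5) : (N2 s 5 n : ℂ) =
    ∑ p : n.Partition, ind (p.noRepeatedOdd ∧ rk p.parts % 5 = s) := by
  classical
  unfold N2 ind
  rw [Nat.card_eq_fintype_card, Fintype.card_subtype, ← Finset.sum_boole]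
  refine Finset.sum_congr rfl fun p _ => ?_
  have : p.m2Rank = rk p.parts := rfl
  simp only [this, Int.ModEq]
  have : ((s : ℤ) % ((5 : ℕ) : ℤ)) = s := by omega
  rw [this, Nat.cast_ofNat]
  congr

/-- `Dq` sorted by size. -/
lemma Dq_hasSum_coeff {q : ℂ} (h1 : ‖q‖ < 1 / 2) : HasSum (fun n => dn n * q ^ n) (Dq q) := by
  have h := (summable_Sg h1 (c := fun s => cc (rk s)) fun s => cc_norm _).hasSum
  have hinj : Function.Injective fun x : Σ n : ℕ, n.Partition => (sigmaEquiv x : Multiset ℕ) :=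
    Subtype.val_injective.comp sigmaEquiv.injective
  rw [← hinj.hasSum_iff] at h
  · refine h.sigma fun n => ?_
    have : dn n * q ^ n = ∑ p : n.Partition, cc (rk p.parts) * wt q p.parts := by
      classical
      rw [dn, N2_eq _ _ (by norm_num), N2_eq _ _ (by norm_num), ← Finset.sum_sub_distrib,
        Finset.sum_mul]
      refine Finset.sum_congr rfl fun p _ => ?_
      have h0 : 0 ∉ p.parts := fun h => lt_irrefl 0 (p.parts_pos h)
      have e : p.parts ∈ Pset ↔ p.noRepeatedOdd := ⟨fun h => h.2, fun h => ⟨h0, h⟩⟩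
      rw [wt, Set.indicator_apply, p.parts_sum]
      by_cases hp : p.noRepeatedOdd <;> simp [hp, e, cc, ind]
    rw [this]
    exact hasSum_fintype _
  · intro s hs
    have : s ∉ Pset := fun h => hs ⟨sigmaEquiv.symm ⟨s, h.1⟩, by simp⟩
    simp [wt, this]

/-- Averaging `quotient_dissect` over the fifth roots of unity. -/
lemma dn_third (n : ℕ) (hn : n % 5 = 3) : dn n = 0 := by
  have hζ := Complex.isPrimitiveRoot_exp 5 (by norm_num)
  set ζ : ℂ := Complex.exp (2 * Real.pi * Complex.I / (5 : ℕ)) with hζd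
  have hζ5 := hζ.pow_eq_one
  have hζ1 : ‖ζ‖ = 1 := Complex.norm_eq_one_of_pow_eq_one hζ5 (by norm_num)
  have hgeo : 1 + ζ + ζ ^ 2 + ζ ^ 3 + ζ ^ 4 = 0 := by
    have := hζ.geom_sum_eq_zero (by norm_num)
    simpa [Finset.sum_range_succ] using this
  -- the part of the generating function supported on exponents `≡ 3 (mod 5)` vanishes
  have key : ∀ Q : ℂ, Q ≠ 0 → ‖Q‖ < 1 / 2 →
      HasSum (fun n => (if n % 5 = 3 then dn n else 0) * (-Q) ^ n) 0 := by
    intro Q hQ h1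
    have hY1 : ‖Q ^ 5‖ < 1 / 2 := by
      rw [norm_pow]
      calc ‖Q‖ ^ 5 ≤ ‖Q‖ ^ 1 := pow_le_pow_of_le_one (norm_nonneg _) (by linarith) (by norm_num)
        _ < 1 / 2 := by simpa using h1
    obtain ⟨E0, E1, E2, E4, hE⟩ := quotient_dissect (pow_ne_zero 5 hQ) hY1
    have hD : ∀ j : ℕ, Dq (-(ζ ^ j * Q)) = E0 + (ζ ^ j * Q) * E1 + (ζ ^ j * Q) ^ 2 * E2
        + (ζ ^ j * Q) ^ 4 * E4 := by
      intro j
      have hj : ζ ^ j * Q ≠ 0 := mul_ne_zero (pow_ne_zero _ (hζ.ne_zero (by norm_num))) hQ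
      have hj1 : ‖ζ ^ j * Q‖ < 1 / 2 := by simpa [hζ1] using h1
      have hj5 : (ζ ^ j * Q) ^ 5 = Q ^ 5 := by
        rw [mul_pow, ← pow_mul, mul_comm j, pow_mul, hζ5, one_pow, one_mul]
      have := hE _ hj5 hj1
      rw [← psi_mul_Dq hj1 hj] at this
      exact mul_left_cancel₀ (psi_ne hj hj1) this
    have hS : ∀ j : ℕ, HasSum (fun n => dn n * (-(ζ ^ j * Q)) ^ n) (Dq (-(ζ ^ j * Q))) := by
      intro j
      exact Dq_hasSum_coeff (by simpa [hζ1] using h1)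
    -- multiply the `j`-th series by `ζ ^ (-3 j) = ζ ^ (2 j)`
    have hT := (((((hS 0).mul_left (1 / 5)).add ((hS 1).mul_left (ζ ^ 2 / 5))).add
      ((hS 2).mul_left (ζ ^ 4 / 5))).add ((hS 3).mul_left (ζ / 5))).add
      ((hS 4).mul_left (ζ ^ 3 / 5))
    refine hasSum_of_eq hT (fun n => ?_) ?_
    · have hz : ∀ j, (-(ζ ^ j * Q)) ^ n = (ζ ^ n) ^ j * (-Q) ^ n := by
        intro j; rw [← mul_neg, mul_pow, ← pow_mul, ← pow_mul, mul_comm j]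
      simp only [hz]
      have hn : ζ ^ n = ζ ^ (n % 5) := by
        conv_lhs => rw [← Nat.div_add_mod n 5, pow_add, pow_mul, hζ5, one_pow, one_mul]
      rw [hn]
      have hlt : n % 5 < 5 := Nat.mod_lt _ (by norm_num)
      generalize n % 5 = r at hlt ⊢
      interval_cases r <;> simp only [reduceIte, Nat.reduceEqDiff]
      · linear_combination (-(dn n * (-Q) ^ n / 5)) * ((0) * hζ5 + hgeo)
      · linear_combination (-(dn n * (-Q) ^ n / 5)) * ((ζ + ζ ^ 2) * hζ5 + hgeo)
      · linear_combination (-(dn n * (-Q) ^ n / 5)) * ((ζ + ζ ^ 2 + ζ ^ 3 + ζ ^ 6) * hζ5 + hgeo)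
      · linear_combination (-(dn n * (-Q) ^ n / 5)) * ((4 * 1 + 3 * ζ ^ 5 + ζ ^ 10) * hζ5)
      · linear_combination (-(dn n * (-Q) ^ n / 5)) *
          ((ζ + ζ ^ 2 + ζ ^ 3 + ζ ^ 4 + ζ ^ 7 + ζ ^ 8 + ζ ^ 9 + ζ ^ 14) * hζ5 + hgeo)
    · simp only [hD]
      linear_combination - (Q ^ 0 * E0 / 5) * ((0) * hζ5 + hgeo)
         - (Q ^ 1 * E1 / 5) * ((ζ + ζ ^ 2) * hζ5 + hgeo)
         - (Q ^ 2 * E2 / 5) * ((ζ + ζ ^ 2 + ζ ^ 3 + ζ ^ 6) * hζ5 + hgeo)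
         - (Q ^ 4 * E4 / 5) *
          ((ζ + ζ ^ 2 + ζ ^ 3 + ζ ^ 4 + ζ ^ 7 + ζ ^ 8 + ζ ^ 9 + ζ ^ 14) * hζ5 + hgeo)
  have hp : HasFPowerSeriesAt (0 : ℂ → ℂ) (FormalMultilinearSeries.ofScalars ℂ
      fun n => if n % 5 = 3 then dn n else 0) 0 := by
    rw [hasFPowerSeriesAt_iff]
    have : Metric.ball (0 : ℂ) (1 / 2) ∈ nhds (0 : ℂ) := Metric.ball_mem_nhds _ (by norm_num)
    filter_upwards [this] with z hz
    simp only [FormalMultilinearSeries.coeff_ofScalars, smul_eq_mul, Pi.zero_apply]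
    by_cases h0 : z = 0
    · subst h0
      refine hasSum_of_eq hasSum_zero (fun n => ?_) rfl
      rcases n with _ | n <;> simp
    · have := key (-z) (neg_ne_zero.2 h0) (by simpa using hz)
      refine hasSum_of_eq this (fun n => ?_) rfl
      rw [neg_neg, mul_comm]
  have h0 := hp.eq_zero
  have := FormalMultilinearSeries.coeff_ofScalars (𝕜 := ℂ)
    (p := fun n => if n % 5 = 3 then dn n else 0) (n := n)
  rw [h0] at this
  simp [hn] at this
  exact this.symm
end M2

theorem M2_rank_diff_mod5_02_d3 (n : ℕ) : N2 0 5 (5 * n + 3) = N2 2 5 (5 * n + 3) := by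
  have h := M2.dn_third (5 * n + 3) (by omega)
  rw [M2.dn, sub_eq_zero] at h
  exact_mod_cast h
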